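/- arXiv:2011.07543 — 5 statements merged into one kernel-verified Lean document; each statement's English description precedes it below -/
import Mathlib

section
/- The category Ban_∞ of generalized complex Banach spaces (complete complex normed vector spaces in which the norm is allowed to take the value ∞) with linear maps of norm ≤ 1 as morphisms is locally ℵ₁-presentable, i.e., it is cocomplete and every object is an ℵ₁-directed colimit of ℵ₁-presentable objects from some fixed set of ℵ₁-presentable objects. -/
/-!
A cocomplete category with a small strong generator consisting of `ℵ₁`-presentable objects is
locally `ℵ₁`-presentable (`IsCardinalLocallyPresentable.iff_exists_isStrongGenerator`). The strong
generator consists of the free objects `free r` on one generator of norm at most `r`, for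
`r ∈ [0,∞]`: a morphism `free r ⟶ Y` is a vector of `Y` of norm at most `r`.

Cocompleteness (`colimIsColimit`): the colimit of the underlying vector spaces carries the
extended seminorm `v ↦ sup ‖s v‖`, the supremum over all cocones `s`, and its separated completion
is the colimit. The norm of the completion is the continuous extension of the seminorm.

Presentability (`isCardinalPresentable_free`): in an `ℵ₁`-filtered diagram, countably many
vectors and equations of the linear colimit can be realized at a single stage
(`exists_common_rep`, `exists_map_eq_countable`). Hence the infimum of the norms of the
representatives of a vector is attained (`exists_rep_enorm_eq`), so that it is a norm, and a Cauchy
sequence lifts isometrically to one stage, where it converges (`completeSpace_colim`). The linear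
colimit with this norm is therefore already the colimit in `Ban_∞` (`filteredIsColimit`), and
vectors of norm at most `r` in it come from some stage.

Strong generation (`isStrongGenerator_free`): vectors are separated by `free ∞`, and norms are
seen by the objects `free ‖y‖`.

The resulting statement about `ℵ₁`-filtered categories is turned into one about `ℵ₁`-directed
posets by final functors from the latter to the former.
-/

open CategoryTheory
open scoped ENNReal

/-- A generalized complex Banach space: a complex vector space with an extended norm
(allowed to take the value `∞`), complete with respect to the induced extended metric. -/
structure GBanach : Type 1 where
  carrier : Type
  [grp : AddCommGroup carrier]
  [mod : Module ℂ carrier]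
  enorm : carrier → ℝ≥0∞
  enorm_eq_zero_iff : ∀ x, enorm x = 0 ↔ x = 0
  enorm_smul : ∀ (c : ℂ) (x : carrier), enorm (c • x) = ‖c‖₊ * enorm x
  enorm_add_le : ∀ x y, enorm (x + y) ≤ enorm x + enorm y
  [emet : EMetricSpace carrier]
  edist_eq : ∀ x y : carrier, edist x y = enorm (x - y)
  [compl : CompleteSpace carrier]

attribute [instance] GBanach.grp GBanach.mod GBanach.emet GBanach.compl

/-- The category `Ban_∞` of generalized complex Banach spaces and linear maps of
norm `≤ 1`. -/
instance : Category GBanach where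
  Hom X Y := { f : X.carrier →ₗ[ℂ] Y.carrier // ∀ x, Y.enorm (f x) ≤ X.enorm x }
  id X := ⟨LinearMap.id, fun _ => le_rfl⟩
  comp f g := ⟨g.1.comp f.1, fun x => le_trans (g.2 _) (f.2 x)⟩
  id_comp f := Subtype.ext (LinearMap.ext fun _ => rfl)
  comp_id f := Subtype.ext (LinearMap.ext fun _ => rfl)
  assoc f g h := Subtype.ext (LinearMap.ext fun _ => rfl)

/-- A poset is `ℵ₁`-directed if every subset of cardinality `< ℵ₁` has an upper bound. -/
def IsAleph1Directed (J : Type) [Preorder J] : Prop :=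
  ∀ S : Set J, Cardinal.mk S < Cardinal.aleph 1 → ∃ j : J, ∀ s ∈ S, s ≤ j

/-- An object `A` is `ℵ₁`-presentable if its hom-functor `K(A,-)` preserves colimits of
all diagrams indexed by `ℵ₁`-directed posets. -/
def IsAleph1Presentable {K : Type 1} [Category.{0} K] (A : K) : Prop :=
  ∀ J : PartOrd.{0}, IsAleph1Directed J →
    Limits.PreservesColimitsOfShape.{0,0} J (coyoneda.obj (Opposite.op A))

/-- A category is locally `ℵ₁`-presentable if it is cocomplete and there is a set of
`ℵ₁`-presentable objects such that every object is a colimit of an `ℵ₁`-directed diagram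
of objects from that set. -/
def IsLocallyAleph1Presentable (K : Type 1) [Category.{0} K] : Prop :=
  Limits.HasColimits K ∧
    ∃ (ι : Type) (A : ι → K),
      (∀ i, IsAleph1Presentable (A i)) ∧
        ∀ X : K, ∃ (J : PartOrd.{0}) (D : J ⥤ K) (c : Limits.Cocone D),
          IsAleph1Directed J ∧ Nonempty (Limits.IsColimit c) ∧ Nonempty (c.pt ≅ X) ∧
            ∀ j : J, ∃ i : ι, Nonempty (D.obj j ≅ A i)

namespace GBanach

/-! ### The separated completion of an extended-seminormed space -/

section Uniform

variable {V : Type} [AddCommGroup V] [PseudoEMetricSpace V] {p : V → ℝ≥0∞}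

theorem isUniformAddGroup_of_edist (hd : ∀ x y : V, edist x y = p (x - y))
    (ha : ∀ x y, p (x + y) ≤ p x + p y) :
    IsUniformAddGroup V where
  uniformContinuous_sub := by
    refine LipschitzWith.uniformContinuous (K := 2) ?_
    rintro ⟨a, b⟩ ⟨c, d⟩
    have h1 : edist (a - b) (c - d) ≤ edist a c + edist b d := by
      rw [edist_comm b d, hd, hd, hd, show a - b - (c - d) = (a - c) + (d - b) by abel]
      exact ha _ _
    refine h1.trans ?_
    rw [Prod.edist_eq]
    push_cast
    rw [two_mul]
    exact add_le_add (le_max_left _ _) (le_max_right _ _)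

theorem uniformContinuousConstSMul_of_edist [Module ℂ V] (hd : ∀ x y : V, edist x y = p (x - y))
    (hs : ∀ (c : ℂ) (x : V), p (c • x) = ‖c‖₊ * p x) :
    UniformContinuousConstSMul ℂ V where
  uniformContinuous_const_smul c := by
    refine LipschitzWith.uniformContinuous (K := ‖c‖₊) ?_
    intro x y
    rw [hd, hd, ← smul_sub, hs]

end Uniform

/-- A complex vector space with an extended seminorm: the norm may take the value `∞`, and need
be neither separated nor complete. -/
structure ESemi : Type 1 where
  carrier : Type
  [grp : AddCommGroup carrier]
  [mod : Module ℂ carrier]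
  p : carrier → ℝ≥0∞
  p_smul : ∀ (c : ℂ) (x : carrier), p (c • x) = ‖c‖₊ * p x
  p_add_le : ∀ x y, p (x + y) ≤ p x + p y

attribute [instance] ESemi.grp ESemi.mod

namespace ESemi

open UniformSpace Filter Topology

variable (M : ESemi)

theorem p_zero : M.p 0 = 0 := by simpa using M.p_smul 0 0

theorem p_neg (x : M.carrier) : M.p (-x) = M.p x := by simpa using M.p_smul (-1) x

noncomputable instance : PseudoEMetricSpace M.carrier where
  edist x y := M.p (x - y)
  edist_self x := by simp [M.p_zero]
  edist_comm x y := by rw [← M.p_neg, neg_sub]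
  edist_triangle x y z := by simpa using M.p_add_le (x - y) (y - z)

theorem edist_def (x y : M.carrier) : edist x y = M.p (x - y) := rfl

instance : IsUniformAddGroup M.carrier :=
  isUniformAddGroup_of_edist M.edist_def M.p_add_le

instance : UniformContinuousConstSMul ℂ M.carrier :=
  uniformContinuousConstSMul_of_edist M.edist_def M.p_smul

theorem p_le (x y : M.carrier) : M.p x ≤ M.p y + edist x y := by
  simpa [edist_def] using M.p_add_le y (x - y)

/-- The seminorm converges along every Cauchy filter. As it takes values in `[0,∞]`, where
uniform extension is not available, the limit is obtained by comparing `limsup` and `liminf`. -/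
theorem exists_tendsto (b : Completion M.carrier) :
    ∃ c, Tendsto M.p (comap (fun x : M.carrier => (x : Completion M.carrier)) (𝓝 b)) (𝓝 c) := by
  set F := comap (fun x : M.carrier => (x : Completion M.carrier)) (𝓝 b) with hF
  have hne : F.NeBot := Completion.isDenseInducing_coe.comap_nhds_neBot b
  have hc : Cauchy F := (cauchy_nhds (a := b)).comap
    (Completion.isUniformInducing_coe M.carrier).comap_uniformity.le
  have key : limsup M.p F ≤ liminf M.p F := by
    refine ENNReal.le_of_forall_pos_le_add fun ε hε _ => ?_
    obtain ⟨S, hS, h⟩ := (EMetric.cauchy_iff.1 hc).2 ε (by simpa using hε)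
    have h2 : ∀ y ∈ S, limsup M.p F - ε ≤ M.p y := by
      intro y hy
      rw [tsub_le_iff_right]
      refine limsup_le_of_le (by isBoundedDefault) ?_
      filter_upwards [hS] with x hx
      exact (M.p_le x y).trans (add_le_add le_rfl (h x hx y hy).le)
    rw [← tsub_le_iff_right]
    refine le_liminf_of_le (by isBoundedDefault) ?_
    filter_upwards [hS] with y hy using h2 y hy
  exact ⟨_, tendsto_of_le_liminf_of_limsup_le le_rfl key⟩

/-- The extension of the seminorm to the completion by continuity. -/
noncomputable def cnorm : Completion M.carrier → ℝ≥0∞ :=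
  Completion.isDenseInducing_coe.extend M.p

theorem continuous_cnorm : Continuous M.cnorm :=
  Completion.isDenseInducing_coe.continuous_extend M.exists_tendsto

theorem continuous_p : Continuous M.p :=
  continuous_of_le_add_edist 1 ENNReal.one_ne_top (by simpa using M.p_le)

@[simp] theorem cnorm_coe (x : M.carrier) : M.cnorm x = M.p x :=
  Completion.isDenseInducing_coe.extend_eq M.continuous_p x

theorem cnorm_smul (c : ℂ) (x : Completion M.carrier) : M.cnorm (c • x) = ‖c‖₊ * M.cnorm x := by
  induction x using Completion.induction_on with
  | hp => exact isClosed_eq (M.continuous_cnorm.comp (continuous_const_smul c))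
            ((ENNReal.continuous_const_mul ENNReal.coe_ne_top).comp M.continuous_cnorm)
  | ih x => rw [← Completion.coe_smul, cnorm_coe, cnorm_coe, M.p_smul]

theorem cnorm_add_le (x y : Completion M.carrier) : M.cnorm (x + y) ≤ M.cnorm x + M.cnorm y := by
  induction x, y using Completion.induction_on₂ with
  | hp => exact isClosed_le (M.continuous_cnorm.comp continuous_add)
            ((M.continuous_cnorm.comp continuous_fst).add (M.continuous_cnorm.comp continuous_snd))
  | ih x y => simpa [← Completion.coe_add] using M.p_add_le x y

theorem cnorm_zero : M.cnorm 0 = 0 := by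
  simpa using M.cnorm_smul 0 0

theorem cnorm_neg (x : Completion M.carrier) : M.cnorm (-x) = M.cnorm x := by
  simpa using M.cnorm_smul (-1) x

/-- The extended norm of the completion induces the topology of the completion. -/
theorem nhds_zero_basis :
    (𝓝 (0 : Completion M.carrier)).HasBasis (fun ε : ℝ≥0∞ => 0 < ε) fun ε => {x | M.cnorm x < ε} := by
  refine ⟨fun U => ⟨fun hU => ?_, fun ⟨ε, hε, h⟩ => ?_⟩⟩
  · obtain ⟨C, hC, hCc, hCU⟩ := exists_mem_nhds_isClosed_subset hU
    have hpre : (fun x : M.carrier => (x : Completion M.carrier)) ⁻¹' C ∈ 𝓝 (0 : M.carrier) :=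
      (Completion.continuous_coe M.carrier).continuousAt.preimage_mem_nhds
        (by rwa [Completion.coe_zero])
    obtain ⟨ε, hε, h⟩ := EMetric.mem_nhds_iff.1 hpre
    refine ⟨ε, hε, fun x hx => hCU ?_⟩
    have hopen : IsOpen {x | M.cnorm x < ε} := isOpen_lt M.continuous_cnorm continuous_const
    -- The open ball is contained in the closure of its trace on the dense subspace.
    have := Completion.denseRange_coe.open_subset_closure_inter hopen hx
    refine hCc.closure_subset_iff.2 ?_ this
    rintro _ ⟨hy, ⟨y, rfl⟩⟩
    refine h ?_
    simpa [edist_def] using hy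
  · refine mem_of_superset ?_ h
    exact (isOpen_lt M.continuous_cnorm continuous_const).mem_nhds (by simpa [M.cnorm_zero])

theorem cnorm_eq_zero_iff (x : Completion M.carrier) : M.cnorm x = 0 ↔ x = 0 := by
  refine ⟨fun h => ?_, fun h => by rw [h, cnorm_zero]⟩
  -- Every neighbourhood of `0` contains `x`, and the completion is separated.
  have : x ⤳ 0 := by
    rw [specializes_iff_pure, M.nhds_zero_basis.ge_iff]
    intro ε hε
    simpa [h] using hε
  exact this.eq

/-- The extended metric of the completion. It is not an instance, so that the uniform structure
of `Completion` stays the only one found by instance search. -/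
@[reducible] noncomputable def emetCompletion : EMetricSpace (Completion M.carrier) where
  edist x y := M.cnorm (x - y)
  edist_self x := by simp [M.cnorm_zero]
  edist_comm x y := by rw [← M.cnorm_neg, neg_sub]
  edist_triangle x y z := by simpa using M.cnorm_add_le (x - y) (y - z)
  toUniformSpace := inferInstance
  uniformity_edist := by
    rw [uniformity_eq_comap_nhds_zero]
    refine ((M.nhds_zero_basis.comap _).eq_biInf).trans ?_
    refine iInf_congr fun ε => iInf_congr fun _ => ?_
    congr 1
    ext ⟨x, y⟩
    simp [← M.cnorm_neg (x - y)]
  eq_of_edist_eq_zero := fun {x y} h => sub_eq_zero.1 ((M.cnorm_eq_zero_iff _).1 h)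

/-- The separated completion of an extended-seminormed space. -/
noncomputable def toGBanach : GBanach where
  carrier := Completion M.carrier
  enorm := M.cnorm
  enorm_eq_zero_iff := M.cnorm_eq_zero_iff
  enorm_smul := M.cnorm_smul
  enorm_add_le := M.cnorm_add_le
  emet := M.emetCompletion
  edist_eq _ _ := rfl
  compl := inferInstanceAs (CompleteSpace (Completion M.carrier))

/-- The canonical map to the completion. -/
noncomputable def toCompl : M.carrier →ₗ[ℂ] M.toGBanach.carrier where
  toFun x := (x : Completion M.carrier)
  map_add' := Completion.coe_add
  map_smul' := Completion.coe_smul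

theorem enorm_toCompl (x : M.carrier) : M.toGBanach.enorm (M.toCompl x) = M.p x := M.cnorm_coe x

end ESemi

instance (Y : GBanach) : IsUniformAddGroup Y.carrier :=
  isUniformAddGroup_of_edist Y.edist_eq Y.enorm_add_le

instance (Y : GBanach) : UniformContinuousConstSMul ℂ Y.carrier :=
  uniformContinuousConstSMul_of_edist Y.edist_eq Y.enorm_smul

theorem enorm_zero (Y : GBanach) : Y.enorm 0 = 0 := (Y.enorm_eq_zero_iff 0).2 rfl

theorem enorm_neg (Y : GBanach) (x : Y.carrier) : Y.enorm (-x) = Y.enorm x := by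
  simpa using Y.enorm_smul (-1) x

theorem uniformContinuous_of_enorm_le {M : ESemi} {Y : GBanach} (g : M.carrier →ₗ[ℂ] Y.carrier)
    (hg : ∀ x, Y.enorm (g x) ≤ M.p x) : UniformContinuous g := by
  refine LipschitzWith.uniformContinuous (K := 1) fun x y => ?_
  rw [Y.edist_eq, ← map_sub, M.edist_def]
  simpa using hg (x - y)

theorem continuous_enorm (Y : GBanach) : Continuous Y.enorm := by
  refine continuous_of_le_add_edist 1 ENNReal.one_ne_top fun x y => ?_
  simpa [Y.edist_eq] using Y.enorm_add_le y (x - y)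

namespace ESemi

open UniformSpace

variable {M : ESemi} {Y : GBanach}

theorem extension_add (g : M.carrier →ₗ[ℂ] Y.carrier) (hg : ∀ x, Y.enorm (g x) ≤ M.p x)
    (x y : Completion M.carrier) :
    Completion.extension g (x + y) = Completion.extension g x + Completion.extension g y := by
  have hu := uniformContinuous_of_enorm_le g hg
  have hc : Continuous (Completion.extension g) := Completion.continuous_extension
  induction x, y using Completion.induction_on₂ with
  | hp => exact isClosed_eq (hc.comp continuous_add)
            ((hc.comp continuous_fst).add (hc.comp continuous_snd))
  | ih x y => rw [← Completion.coe_add]; simp only [Completion.extension_coe hu, map_add]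

theorem extension_smul (g : M.carrier →ₗ[ℂ] Y.carrier) (hg : ∀ x, Y.enorm (g x) ≤ M.p x)
    (c : ℂ) (x : Completion M.carrier) :
    Completion.extension g (c • x) = c • Completion.extension g x := by
  have hu := uniformContinuous_of_enorm_le g hg
  have hc : Continuous (Completion.extension g) := Completion.continuous_extension
  induction x using Completion.induction_on with
  | hp => exact isClosed_eq (hc.comp (continuous_const_smul c)) (hc.const_smul c)
  | ih x => rw [← Completion.coe_smul]; simp only [Completion.extension_coe hu, map_smul]

theorem enorm_extension_le (g : M.carrier →ₗ[ℂ] Y.carrier) (hg : ∀ x, Y.enorm (g x) ≤ M.p x)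
    (x : Completion M.carrier) : Y.enorm (Completion.extension g x) ≤ M.cnorm x := by
  have hc : Continuous (Completion.extension g) := Completion.continuous_extension
  induction x using Completion.induction_on with
  | hp => exact isClosed_le (Y.continuous_enorm.comp hc) M.continuous_cnorm
  | ih x =>
    simpa only [Completion.extension_coe (uniformContinuous_of_enorm_le g hg), cnorm_coe] using hg x

/-- The extension to the completion of a linear map to a generalized Banach space that does not
increase the (semi)norm. -/
noncomputable def lift (g : M.carrier →ₗ[ℂ] Y.carrier) (hg : ∀ x, Y.enorm (g x) ≤ M.p x) :
    M.toGBanach ⟶ Y :=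
  ⟨{ toFun := (Completion.extension g : Completion M.carrier → Y.carrier)
     map_add' := extension_add g hg
     map_smul' := extension_smul g hg }, enorm_extension_le g hg⟩

theorem lift_toCompl (g : M.carrier →ₗ[ℂ] Y.carrier) (hg : ∀ x, Y.enorm (g x) ≤ M.p x)
    (x : M.carrier) : (lift g hg).1 (M.toCompl x) = g x :=
  Completion.extension_coe (uniformContinuous_of_enorm_le g hg) x

theorem hom_ext {f g : M.toGBanach ⟶ Y}
    (h : ∀ x : M.carrier, f.1 (M.toCompl x) = g.1 (M.toCompl x)) : f = g := by
  have key : ∀ k : M.toGBanach ⟶ Y, Continuous k.1 := fun k => by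
    refine LipschitzWith.continuous (K := 1) fun x y => ?_
    rw [Y.edist_eq, ← map_sub, M.toGBanach.edist_eq]
    simpa using k.2 (x - y)
  refine Subtype.ext (LinearMap.ext fun x => ?_)
  change Completion M.carrier at x
  induction x using Completion.induction_on with
  | hp => exact isClosed_eq (key f) (key g)
  | ih x => exact h x

end ESemi

/-! ### Cocompleteness -/

open Limits

/-- The functor that forgets the norm. -/
def toMod : GBanach ⥤ ModuleCat.{0} ℂ where
  obj X := ModuleCat.of ℂ X.carrier
  map f := ModuleCat.ofHom f.1

section Colimits

variable {J : Type} [SmallCategory J] (D : J ⥤ GBanach)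

/-- The colimit of the underlying vector spaces. -/
noncomputable abbrev colimMod : ModuleCat.{0} ℂ := colimit (D ⋙ toMod)

/-- The linear map out of the linear colimit induced by a cocone. -/
noncomputable abbrev descMod (s : Cocone D) : colimMod D →ₗ[ℂ] s.pt.carrier :=
  (colimit.desc (D ⋙ toMod) (toMod.mapCocone s)).hom

/-- The coprojections of the linear colimit. -/
noncomputable abbrev ιMod (j : J) : (D.obj j).carrier →ₗ[ℂ] colimMod D :=
  (colimit.ι (D ⋙ toMod) j).hom

theorem descMod_ι (s : Cocone D) (j : J) (x : (D.obj j).carrier) :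
    descMod D s (ιMod D j x) = (s.ι.app j).1 x :=
  ConcreteCategory.congr_hom (colimit.ι_desc (toMod.mapCocone s) j) x

theorem ιMod_map {j k : J} (f : j ⟶ k) (x : (D.obj j).carrier) :
    ιMod D k ((D.map f).1 x) = ιMod D j x :=
  ConcreteCategory.congr_hom (colimit.w (D ⋙ toMod) f) x

/-- The colimit of the underlying vector spaces, with the seminorm `v ↦ sup ‖s v‖`, where
`s` ranges over all cocones. The cocones form a proper class, but the supremum is that of a set
of elements of `[0,∞]`. -/
noncomputable def colimSemi : ESemi where
  carrier := colimMod D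
  p v := ⨆ s : Cocone D, s.pt.enorm (descMod D s v)
  p_smul c v := by simp only [map_smul, enorm_smul, ENNReal.mul_iSup]
  p_add_le v w := by
    refine iSup_le fun s => ?_
    rw [map_add]
    exact (s.pt.enorm_add_le _ _).trans
      (add_le_add (le_iSup (fun s : Cocone D => s.pt.enorm (descMod D s v)) s)
        (le_iSup (fun s : Cocone D => s.pt.enorm (descMod D s w)) s))

theorem enorm_descMod_le (s : Cocone D) (v : (colimSemi D).carrier) :
    s.pt.enorm (descMod D s v) ≤ (colimSemi D).p v :=
  le_iSup (fun s : Cocone D => s.pt.enorm (descMod D s v)) s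

/-- The completion of `colimSemi D`, as a cocone over `D`. -/
noncomputable def colimCocone : Cocone D where
  pt := (colimSemi D).toGBanach
  ι :=
    { app := fun j => ⟨(colimSemi D).toCompl.comp (ιMod D j), fun x => by
        refine ((colimSemi D).enorm_toCompl _).le.trans (iSup_le fun s => ?_)
        exact (congrArg s.pt.enorm (descMod_ι D s j x)).le.trans ((s.ι.app j).2 x)⟩
      naturality := fun j k f => Subtype.ext (LinearMap.ext fun x =>
        congrArg (colimSemi D).toCompl (ιMod_map D f x)) }

noncomputable def colimIsColimit : IsColimit (colimCocone D) where
  desc s := ESemi.lift (M := colimSemi D) (descMod D s) (enorm_descMod_le D s)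
  fac s j := Subtype.ext (LinearMap.ext fun x =>
    (ESemi.lift_toCompl (M := colimSemi D) (descMod D s) (enorm_descMod_le D s) (ιMod D j x)).trans
      (descMod_ι D s j x))
  uniq s m hm := ESemi.hom_ext fun x => by
    change (colimSemi D).toGBanach ⟶ s.pt at m
    refine Eq.trans ?_ (ESemi.lift_toCompl (M := colimSemi D) (descMod D s)
      (enorm_descMod_le D s) x).symm
    have : ModuleCat.ofHom (m.1.comp (colimSemi D).toCompl) =
        colimit.desc (D ⋙ toMod) (toMod.mapCocone s) := by
      refine colimit.hom_ext fun j => ?_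
      refine Eq.trans ?_ (colimit.ι_desc (toMod.mapCocone s) j).symm
      exact ModuleCat.hom_ext (congrArg Subtype.val (hm j))
    exact ConcreteCategory.congr_hom this x

end Colimits

instance : HasColimits GBanach where
  has_colimits_of_shape _ _ := ⟨fun D => ⟨⟨⟨colimCocone D, colimIsColimit D⟩⟩⟩⟩

/-! ### `ℵ₁`-filtered colimits -/

instance : Fact (Cardinal.aleph.{0} 1).IsRegular := ⟨Cardinal.isRegular_aleph_one⟩

theorem hasCardinalLT_of_countable (K : Type) [Countable K] :
    HasCardinalLT K (Cardinal.aleph.{0} 1) := by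
  rw [hasCardinalLT_iff_cardinal_mk_lt]
  exact (Cardinal.mk_le_aleph0 (α := K)).trans_lt Cardinal.aleph0_lt_aleph_one

section Filtered

variable {J : Type} [SmallCategory J] (D : J ⥤ GBanach)

theorem map_comp_apply {j k l : J} (f : j ⟶ k) (g : k ⟶ l) (x : (D.obj j).carrier) :
    (D.map (f ≫ g)).1 x = (D.map g).1 ((D.map f).1 x) := by
  rw [D.map_comp]; rfl

/-- The quotient extended norm on the colimit of the underlying vector spaces: the infimum of the
norms of the representatives. -/
noncomputable def colimNorm (v : colimMod D) : ℝ≥0∞ :=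
  ⨅ (j : J) (x : (D.obj j).carrier) (_ : ιMod D j x = v), (D.obj j).enorm x

theorem colimNorm_ι_le (j : J) (x : (D.obj j).carrier) :
    colimNorm D (ιMod D j x) ≤ (D.obj j).enorm x :=
  iInf_le_of_le j (iInf_le_of_le x (iInf_le_of_le rfl le_rfl))

variable [IsCardinalFiltered J (Cardinal.aleph.{0} 1)]

instance : IsFiltered J :=
  isFiltered_of_isCardinalFiltered J (Cardinal.aleph.{0} 1)

theorem exists_rep (v : colimMod D) : ∃ j, ∃ x : (D.obj j).carrier, ιMod D j x = v :=
  Concrete.colimit_exists_rep (D ⋙ toMod) v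

theorem exists_map_eq {j : J} {x y : (D.obj j).carrier} (h : ιMod D j x = ιMod D j y) :
    ∃ (k : J) (f : j ⟶ k), (D.map f).1 x = (D.map f).1 y := by
  obtain ⟨k, f, g, e⟩ := Concrete.colimit_exists_of_rep_eq (D ⋙ toMod) x y h
  refine ⟨_, f ≫ IsFiltered.coeqHom f g, ?_⟩
  conv_rhs => rw [IsFiltered.coeq_condition]
  rw [map_comp_apply, map_comp_apply]
  exact congrArg _ e

/-- Countably many equations that hold in the colimit hold at a single later stage. -/
theorem exists_map_eq_countable {K : Type} [Countable K] {j : J} {x y : K → (D.obj j).carrier}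
    (h : ∀ i, ιMod D j (x i) = ιMod D j (y i)) :
    ∃ (k : J) (f : j ⟶ k), ∀ i, (D.map f).1 (x i) = (D.map f).1 (y i) := by
  choose k f e using fun i => exists_map_eq D (h i)
  obtain ⟨m, a, b, hb⟩ := IsCardinalFiltered.wideSpan f (hasCardinalLT_of_countable K)
  refine ⟨m, b, fun i => ?_⟩
  rw [← hb i, map_comp_apply, map_comp_apply, e]

/-- The infimum defining the norm of the colimit is attained: representatives `x n` of `v` with
norm at most `1 / (n + 1)` above it become equal at a common later stage. -/
theorem exists_rep_enorm_eq (v : colimMod D) :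
    ∃ j, ∃ x : (D.obj j).carrier, ιMod D j x = v ∧ (D.obj j).enorm x = colimNorm D v := by
  by_cases hv : colimNorm D v = ⊤
  · obtain ⟨j, x, rfl⟩ := exists_rep D v
    exact ⟨j, x, rfl, top_le_iff.1 (hv ▸ colimNorm_ι_le D j x) |>.trans hv.symm⟩
  have h : ∀ n : ℕ, ∃ j, ∃ x : (D.obj j).carrier, ιMod D j x = v ∧
      (D.obj j).enorm x < colimNorm D v + ((n : ℝ≥0∞) + 1)⁻¹ := fun n => by
    have : colimNorm D v < colimNorm D v + ((n : ℝ≥0∞) + 1)⁻¹ :=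
      ENNReal.lt_add_right hv (by simp)
    conv_lhs at this => unfold colimNorm
    simp only [iInf_lt_iff] at this
    obtain ⟨j, x, h1, h2⟩ := this
    exact ⟨j, x, h1, h2⟩
  choose j x hx hn using h
  let m := IsCardinalFiltered.max (κ := Cardinal.aleph.{0} 1) j (hasCardinalLT_of_countable ℕ)
  let t : ∀ n, j n ⟶ m := IsCardinalFiltered.toMax j (hasCardinalLT_of_countable ℕ)
  obtain ⟨k, f, hf⟩ := exists_map_eq_countable D (x := fun n => (D.map (t n)).1 (x n))
    (y := fun _ => (D.map (t 0)).1 (x 0)) (fun n => by simp only [ιMod_map, hx])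
  have e : ιMod D k ((D.map f).1 ((D.map (t 0)).1 (x 0))) = v := by simp only [ιMod_map, hx]
  refine ⟨k, _, e, le_antisymm ?_ ((congrArg _ e).ge.trans (colimNorm_ι_le D k _))⟩
  have hle : ∀ n : ℕ, (D.obj k).enorm ((D.map f).1 ((D.map (t 0)).1 (x 0))) ≤
      colimNorm D v + ((n : ℝ≥0∞) + 1)⁻¹ := fun n => by
    rw [← hf n]
    exact (((D.map f).2 _).trans ((D.map (t n)).2 _)).trans (hn n).le
  refine ge_of_tendsto' (x := Filter.atTop) ?_ hle
  have h0 : Filter.Tendsto (fun n : ℕ => ((n : ℝ≥0∞) + 1)⁻¹) Filter.atTop (nhds 0) := by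
    have := (Filter.tendsto_add_atTop_iff_nat 1).2 ENNReal.tendsto_inv_nat_nhds_zero
    simpa using this
  simpa using h0.const_add (colimNorm D v)

/-- Countably many vectors of the colimit are represented, without increase of the norms, at a
single stage. -/
theorem exists_common_rep {K : Type} [Countable K] (v : K → colimMod D) :
    ∃ j, ∃ x : K → (D.obj j).carrier, ∀ i, ιMod D j (x i) = v i ∧
      (D.obj j).enorm (x i) = colimNorm D (v i) := by
  choose j x hx hn using fun i => exists_rep_enorm_eq D (v i)
  let t := IsCardinalFiltered.toMax (κ := Cardinal.aleph.{0} 1) j (hasCardinalLT_of_countable K)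
  have e : ∀ i, ιMod D _ ((D.map (t i)).1 (x i)) = v i := fun i => by simp only [ιMod_map, hx]
  refine ⟨_, fun i => (D.map (t i)).1 (x i), fun i => ⟨e i, le_antisymm ?_ ?_⟩⟩
  · exact ((D.map (t i)).2 _).trans (hn i).le
  · exact (congrArg _ (e i)).ge.trans (colimNorm_ι_le D _ _)

theorem colimNorm_smul_le (c : ℂ) (v : colimMod D) :
    colimNorm D (c • v) ≤ ‖c‖₊ * colimNorm D v := by
  obtain ⟨j, x, rfl, hx⟩ := exists_rep_enorm_eq D v
  rw [← hx, ← (D.obj j).enorm_smul, ← map_smul]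
  exact colimNorm_ι_le D _ _

theorem colimNorm_add_le (v w : colimMod D) :
    colimNorm D (v + w) ≤ colimNorm D v + colimNorm D w := by
  obtain ⟨j, x, hx⟩ := exists_common_rep D (fun b : Bool => cond b v w)
  have ht := hx true
  have hf := hx false
  simp only [cond_true, cond_false] at ht hf
  rw [← ht.2, ← hf.2, ← ht.1, ← hf.1, ← map_add]
  exact (colimNorm_ι_le D _ _).trans ((D.obj j).enorm_add_le _ _)

theorem colimNorm_eq_zero_iff (v : colimMod D) : colimNorm D v = 0 ↔ v = 0 := by
  constructor
  · intro h
    obtain ⟨j, x, rfl, hx⟩ := exists_rep_enorm_eq D v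
    rw [h, (D.obj j).enorm_eq_zero_iff] at hx
    rw [hx, map_zero]
  · rintro rfl
    obtain ⟨j⟩ := IsFiltered.nonempty (C := J)
    have := colimNorm_ι_le D j 0
    rwa [map_zero, enorm_zero, nonpos_iff_eq_zero] at this

theorem colimNorm_smul (c : ℂ) (v : colimMod D) : colimNorm D (c • v) = ‖c‖₊ * colimNorm D v := by
  refine le_antisymm (colimNorm_smul_le D c v) ?_
  rcases eq_or_ne c 0 with rfl | hc
  · simp
  have h := colimNorm_smul_le D c⁻¹ (c • v)
  rw [inv_smul_smul₀ hc] at h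
  calc (‖c‖₊ : ℝ≥0∞) * colimNorm D v
      ≤ ‖c‖₊ * (‖c⁻¹‖₊ * colimNorm D (c • v)) := by gcongr
    _ = colimNorm D (c • v) := by
      rw [← mul_assoc, ← ENNReal.coe_mul, ← nnnorm_mul, mul_inv_cancel₀ hc]; simp

/-- The extended metric of the norm `colimNorm`. -/
@[reducible] noncomputable def colimEMetric : EMetricSpace (colimMod D) where
  edist x y := colimNorm D (x - y)
  edist_self x := by simp [colimNorm_eq_zero_iff]
  edist_comm x y := by
    have := colimNorm_smul D (-1) (x - y)
    simpa [eq_comm] using this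
  edist_triangle x y z := by simpa using colimNorm_add_le D (x - y) (y - z)
  eq_of_edist_eq_zero := fun {x y} h => sub_eq_zero.1 ((colimNorm_eq_zero_iff D _).1 h)

open Filter Topology in
/-- A Cauchy sequence of the colimit lifts, together with the norms of all the differences of its
terms, to a single stage, which is complete. -/
theorem completeSpace_colim : @CompleteSpace (colimMod D) (colimEMetric D).toUniformSpace := by
  let := colimEMetric D
  have hd : ∀ a b : colimMod D, edist a b = colimNorm D (a - b) := fun _ _ => rfl
  refine EMetric.complete_of_cauchySeq_tendsto fun u hu => ?_
  obtain ⟨j, x, hx⟩ := exists_common_rep D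
    (Sum.elim u (fun p : ℕ × ℕ => u p.1 - u p.2))
  have h1 : ∀ n, ιMod D j (x (.inl n)) = u n := fun n => (hx (.inl n)).1
  have h2 : ∀ p : ℕ × ℕ, ιMod D j (x (.inr p)) = u p.1 - u p.2 := fun p => (hx (.inr p)).1
  have h3 : ∀ p : ℕ × ℕ, (D.obj j).enorm (x (.inr p)) = colimNorm D (u p.1 - u p.2) :=
    fun p => (hx (.inr p)).2
  obtain ⟨k, f, hf⟩ := exists_map_eq_countable D (K := ℕ × ℕ) (j := j)
    (x := fun p => x (.inl p.1) - x (.inl p.2)) (y := fun p => x (.inr p))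
    (fun p => by simp only [map_sub, h1, h2])
  have hle : ∀ n m, edist ((D.map f).1 (x (.inl n))) ((D.map f).1 (x (.inl m))) ≤
      edist (u n) (u m) := fun n m => by
    rw [(D.obj k).edist_eq, ← map_sub, hf (n, m), hd, ← h3 (n, m)]
    exact (D.map f).2 _
  have hc : CauchySeq fun n => (D.map f).1 (x (.inl n)) := by
    rw [EMetric.cauchySeq_iff] at hu ⊢
    intro ε hε
    obtain ⟨N, hN⟩ := hu ε hε
    exact ⟨N, fun m hm n hn => (hle m n).trans_lt (hN m hm n hn)⟩
  obtain ⟨y, hy⟩ := cauchySeq_tendsto_of_complete hc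
  refine ⟨ιMod D k y, ?_⟩
  rw [tendsto_iff_edist_tendsto_0] at hy ⊢
  refine tendsto_of_tendsto_of_tendsto_of_le_of_le tendsto_const_nhds hy
    (fun _ => bot_le) fun n => ?_
  rw [hd, (D.obj k).edist_eq, ← h1, ← ιMod_map D f, ← map_sub]
  exact colimNorm_ι_le D _ _

/-- For an `ℵ₁`-filtered diagram, the linear colimit with the norm `colimNorm` is a generalized
Banach space; no completion is needed. -/
noncomputable def filteredCocone : Cocone D where
  pt :=
    { carrier := colimMod D
      enorm := colimNorm D
      enorm_eq_zero_iff := colimNorm_eq_zero_iff D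
      enorm_smul := colimNorm_smul D
      enorm_add_le := colimNorm_add_le D
      emet := colimEMetric D
      edist_eq := fun _ _ => rfl
      compl := completeSpace_colim D }
  ι :=
    { app := fun j => ⟨ιMod D j, colimNorm_ι_le D j⟩
      naturality := fun j k f => Subtype.ext (LinearMap.ext fun x => ιMod_map D f x) }

noncomputable def filteredIsColimit : IsColimit (filteredCocone D) where
  desc s := ⟨descMod D s, fun v => by
    obtain ⟨j, x, rfl, hx⟩ := exists_rep_enorm_eq D v
    exact (congrArg _ (descMod_ι D s j x)).le.trans (((s.ι.app j).2 x).trans hx.le)⟩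
  fac s j := Subtype.ext (LinearMap.ext fun x => descMod_ι D s j x)
  uniq s m hm := Subtype.ext (LinearMap.ext fun v => by
    obtain ⟨j, x, rfl⟩ := exists_rep D v
    exact (LinearMap.congr_fun (congrArg Subtype.val (hm j)) x).trans (descMod_ι D s j x).symm)

end Filtered

/-! ### Presentability of the free objects -/

section Free

/-- The space `ℂ` with the extended seminorm `r * |·|`, where `0 * ∞ = 0`. -/
noncomputable def freeSemi (r : ℝ≥0∞) : ESemi where
  carrier := ℂ
  p z := ‖z‖₊ * r
  p_smul c x := by
    change ((‖c • x‖₊ : NNReal) : ℝ≥0∞) * r = _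
    rw [nnnorm_smul, ENNReal.coe_mul, mul_assoc]
  p_add_le x y := by
    rw [← add_mul, ← ENNReal.coe_add]
    gcongr
    exact nnnorm_add_le (E := ℂ) x y

/-- The free object on one generator of norm at most `r`. It is `0` for `r = 0`. -/
noncomputable def free (r : ℝ≥0∞) : GBanach := (freeSemi r).toGBanach

/-- The generator of `free r`. -/
noncomputable def gen (r : ℝ≥0∞) : (free r).carrier := (freeSemi r).toCompl (1 : ℂ)

theorem enorm_gen (r : ℝ≥0∞) : (free r).enorm (gen r) = r := by
  refine ((freeSemi r).enorm_toCompl _).trans ?_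
  change ((‖(1 : ℂ)‖₊ : NNReal) : ℝ≥0∞) * r = r
  simp

/-- The morphism from the free object sending the generator to a given `y` of norm at most `r`. -/
noncomputable def freeLift {r : ℝ≥0∞} {Y : GBanach} (y : Y.carrier) (hy : Y.enorm y ≤ r) :
    free r ⟶ Y :=
  ESemi.lift (M := freeSemi r) (LinearMap.toSpanSingleton ℂ Y.carrier y) fun (z : ℂ) => by
    refine (Y.enorm_smul z y).le.trans ?_
    change _ ≤ ((‖z‖₊ : NNReal) : ℝ≥0∞) * r
    gcongr

theorem freeLift_gen {r : ℝ≥0∞} {Y : GBanach} (y : Y.carrier) (hy : Y.enorm y ≤ r) :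
    (freeLift y hy).1 (gen r) = y :=
  (ESemi.lift_toCompl (M := freeSemi r) _ _ _).trans (one_smul ℂ y)

theorem free_hom_ext {r : ℝ≥0∞} {Y : GBanach} {f g : free r ⟶ Y}
    (h : f.1 (gen r) = g.1 (gen r)) : f = g := by
  refine ESemi.hom_ext (M := freeSemi r) fun (z : ℂ) => ?_
  have e : (freeSemi r).toCompl z = z • gen r := by
    refine Eq.trans ?_ ((freeSemi r).toCompl.map_smul z (1 : ℂ))
    exact congrArg (freeSemi r).toCompl (mul_one z).symm
  refine (congrArg f.1 e).trans (Eq.trans ?_ (congrArg g.1 e).symm)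
  refine (map_smul f.1 _ _).trans (Eq.trans ?_ (map_smul g.1 _ _).symm)
  rw [h]

theorem enorm_hom_gen_le {r : ℝ≥0∞} {Y : GBanach} (f : free r ⟶ Y) :
    Y.enorm (f.1 (gen r)) ≤ r := (f.2 _).trans (enorm_gen r).le

/-- Maps out of `free r` are vectors of norm at most `r`. In an `ℵ₁`-filtered colimit such a vector
has a representative of the same norm, and two representatives of it become equal at a later
stage. -/
instance isCardinalPresentable_free (r : ℝ≥0∞) :
    IsCardinalPresentable (free r) (Cardinal.aleph.{0} 1) :=
  ⟨fun J _ _ => ⟨fun {D} => preservesColimit_of_preserves_colimit_cocone (filteredIsColimit D)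
    (Types.FilteredColimit.isColimitOf' _ _
      (fun f => by
        obtain ⟨j, x, hx, hn⟩ := exists_rep_enorm_eq D (f.1 (gen r))
        have hr : (D.obj j).enorm x ≤ r := hn.le.trans (enorm_hom_gen_le f)
        refine ⟨j, freeLift x hr, free_hom_ext ?_⟩
        exact hx.symm.trans (congrArg (ιMod D j) (freeLift_gen x hr)).symm)
      (fun j f g h => by
        obtain ⟨k, t, ht⟩ := exists_map_eq D (j := j) (x := f.1 (gen r)) (y := g.1 (gen r))
          (congrArg (fun φ : free r ⟶ (filteredCocone D).pt => φ.1 (gen r)) h)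
        exact ⟨k, t, free_hom_ext ht⟩))⟩⟩

end Free

/-! ### The strong generator -/

section Generator

theorem isIso_of_bijective {X Y : GBanach} (i : X ⟶ Y) (h : Function.Bijective i.1)
    (hn : ∀ x, Y.enorm (i.1 x) = X.enorm x) : IsIso i := by
  let e := LinearEquiv.ofBijective i.1 h
  refine ⟨⟨e.symm.toLinearMap, fun y => ?_⟩, Subtype.ext (LinearMap.ext e.symm_apply_apply),
    Subtype.ext (LinearMap.ext e.apply_symm_apply)⟩
  rw [← hn]
  exact (congrArg _ (e.apply_symm_apply y)).le

/-- The object `free ∞` detects equality of vectors, so that monomorphisms are injective; lifting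
`y` through `free ‖y‖` shows that a monomorphism inducing surjections on all maps out of the free
objects is surjective and preserves norms. -/
theorem isStrongGenerator_free : (ObjectProperty.ofObj free).IsStrongGenerator := by
  rw [ObjectProperty.isStrongGenerator_iff]
  refine ⟨fun X Y f g h => ?_, fun X Y i _ h => ?_⟩
  · refine Subtype.ext (LinearMap.ext fun x => ?_)
    have := h (free ⊤) (ObjectProperty.ofObj_apply _ _) (freeLift x le_top)
    have := LinearMap.congr_fun (congrArg Subtype.val this) (gen ⊤)
    have e := freeLift_gen x (le_top : X.enorm x ≤ ⊤)
    exact (congrArg f.1 e).symm.trans (this.trans (congrArg g.1 e))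
  · have inj : Function.Injective i.1 := fun x y hxy => by
      have : freeLift (r := ⊤) x le_top ≫ i = freeLift y le_top ≫ i := free_hom_ext <|
        (congrArg i.1 (freeLift_gen x le_top)).trans
          (hxy.trans (congrArg i.1 (freeLift_gen y le_top)).symm)
      rw [cancel_mono] at this
      rw [← freeLift_gen x le_top, this, freeLift_gen]
    have lift : ∀ y : Y.carrier, ∃ x, i.1 x = y ∧ X.enorm x ≤ Y.enorm y := fun y => by
      obtain ⟨f, hf⟩ := h (free (Y.enorm y)) (ObjectProperty.ofObj_apply _ _) (freeLift y le_rfl)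
      exact ⟨f.1 (gen _), (LinearMap.congr_fun (congrArg Subtype.val hf) (gen _)).trans
        (freeLift_gen y le_rfl), enorm_hom_gen_le f⟩
    refine isIso_of_bijective i ⟨inj, fun y => (lift y).imp fun _ h => h.1⟩ fun x => ?_
    obtain ⟨x', hx', hn⟩ := lift (i.1 x)
    rw [inj hx'] at hn
    exact le_antisymm (i.2 x) hn

instance : IsCardinalLocallyPresentable GBanach (Cardinal.aleph.{0} 1) :=
  (IsCardinalLocallyPresentable.iff_exists_isStrongGenerator GBanach _).2
    ⟨ObjectProperty.ofObj free, inferInstance, isStrongGenerator_free, by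
      rintro _ ⟨r⟩
      exact isCardinalPresentable_free r⟩

end Generator

/-! ### Directed posets -/

theorem isCardinalFiltered_of_isAleph1Directed {J : Type} [PartialOrder J]
    (h : IsAleph1Directed J) : IsCardinalFiltered J (Cardinal.aleph.{0} 1) :=
  isCardinalFiltered_preorder _ _ fun K s hK => by
    obtain ⟨j, hj⟩ := h (Set.range s) (Cardinal.mk_range_le.trans_lt hK)
    exact ⟨j, fun k => hj _ ⟨k, rfl⟩⟩

theorem isAleph1Directed_of_isCardinalFiltered (J : Type) [PartialOrder J]
    [IsCardinalFiltered J (Cardinal.aleph.{0} 1)] : IsAleph1Directed J := fun S hS =>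
  have hS' := (hasCardinalLT_iff_cardinal_mk_lt S (Cardinal.aleph.{0} 1)).2 hS
  ⟨_, fun s hs => leOfHom (IsCardinalFiltered.toMax (fun s : S => (s : J)) hS' ⟨s, hs⟩)⟩

theorem isAleph1Presentable_of_isCardinalPresentable (A : GBanach)
    [IsCardinalPresentable A (Cardinal.aleph.{0} 1)] : IsAleph1Presentable A := fun J hJ =>
  have := isCardinalFiltered_of_isAleph1Directed hJ
  preservesColimitsOfShape_of_isCardinalPresentable A (Cardinal.aleph.{0} 1) J

end GBanach

/-- The category `Ban_∞` of generalized complex Banach spaces is locally `ℵ₁`-presentable. -/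
theorem GBanach.isLocallyAleph1Presentable : IsLocallyAleph1Presentable GBanach := by
  obtain ⟨P, hP, h⟩ :=
    HasCardinalFilteredGenerator.exists_small_generator GBanach (Cardinal.aleph.{0} 1)
  refine ⟨inferInstance, Shrink.{0} (Subtype P), fun i => ((equivShrink _).symm i).1,
    fun i => ?_, fun X => ?_⟩
  · have := h.le_isCardinalPresentable _ ((equivShrink (Subtype P)).symm i).2
    rw [isCardinalPresentable_iff] at this
    exact isAleph1Presentable_of_isCardinalPresentable _
  · obtain ⟨J, _, _, ⟨c⟩⟩ := h.exists_colimitsOfShape X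
    -- Every `ℵ₁`-filtered category receives a final functor from an `ℵ₁`-directed poset.
    obtain ⟨α, _, _, F, _⟩ :=
      IsCardinalFiltered.exists_cardinal_directed J (Cardinal.aleph.{0} 1)
    refine ⟨PartOrd.of α, F ⋙ c.diag, Limits.Cocone.whisker F (Limits.Cocone.mk X c.ι),
      isAleph1Directed_of_isCardinalFiltered α,
      ⟨(Functor.Final.isColimitWhiskerEquiv F _).symm c.isColimit⟩, ⟨Iso.refl _⟩, fun j => ?_⟩
    refine ⟨equivShrink _ ⟨_, c.prop_diag_obj (F.obj j)⟩, ⟨eqToIso ?_⟩⟩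
    simp
end

section
/- The forgetful functor V_∞ : Ban_∞ → CMet_∞, sending a generalized complex Banach space to its underlying complete generalized metric space (with metric d(x,y) = ‖x−y‖) and a contractive linear map to its underlying nonexpanding map, is monadic: it has a left adjoint and the comparison functor from Ban_∞ to the Eilenberg–Moore category of the induced monad is an equivalence of categories. -/
/-!
The proof constructs a left adjoint and applies Beck's monadicity theorem.

The free generalized Banach space on `X` is the completion of the free complex vector space on `X`
for the largest extended seminorm making all linear extensions of nonexpanding maps from `X` into
generalized Banach spaces contractive. These extensions then pass to the completion, which is the
universal property (`VinfMonadic.homEquiv`). The completion needs an extended norm: the seminorm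
converges in `[0, ∞]` along Cauchy filters (`exists_tendsto`), and its extension induces the
uniformity of the completion (`nhds_zero_hasBasis`).

For Beck's theorem, let `f, g : A ⟶ B` have a split coequalizer `h : B → Z` of metric spaces, with
nonexpanding section `s`. The splitting makes the kernel relation of `h` a linear congruence
(`retractOfSplit`), so `Z` is a vector space and `h` is linear. Operations on `Z` are obtained by
applying `s`, then the operation of `B`, then `h`, so translations of `Z` are nonexpanding, and
isometric because they are invertible; likewise scaling by `c` multiplies distances by `|c|`. Hence
the metric of `Z` comes from an extended norm. A morphism coequalizing `f` and `g` factors through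
`h` by precomposition with `s`, so `Z` is the coequalizer (`isColimit`), preserved by the forgetful
functor by construction. Finally the inverse of a linear bijective isometry is linear, so the
forgetful functor reflects isomorphisms.
-/

open CategoryTheory
open scoped ENNReal

/-- The category `CMet_∞` of complete generalized metric spaces (extended metric spaces)
and nonexpanding maps. -/
structure CMetInf : Type 1 where
  carrier : Type
  [met : EMetricSpace carrier]
  [compl : CompleteSpace carrier]

attribute [instance] CMetInf.met CMetInf.compl

instance : Category CMetInf where
  Hom X Y := { f : X.carrier → Y.carrier // LipschitzWith 1 f }
  id X := ⟨id, LipschitzWith.id⟩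
  comp f g := ⟨g.1 ∘ f.1, by simpa using g.2.comp f.2⟩
  id_comp f := Subtype.ext rfl
  comp_id f := Subtype.ext rfl
  assoc f g h := Subtype.ext rfl

/-- The forgetful functor `V_∞ : Ban_∞ ⥤ CMet_∞` sending a generalized Banach space to its
underlying complete generalized metric space. -/
def Vinf : GBanach ⥤ CMetInf where
  obj X := { carrier := X.carrier }
  map {X Y} f := ⟨f.1, LipschitzWith.of_edist_le fun x y => by
    rw [X.edist_eq, Y.edist_eq, ← map_sub]
    exact f.2 _⟩
  map_id X := Subtype.ext rfl
  map_comp f g := Subtype.ext rfl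

open Filter Topology UniformSpace

namespace VinfMonadic

/-! ### Extended seminorms as translation-invariant extended metrics -/

/-- The extended pseudometric of `E` comes from an extended seminorm: it is translation invariant
and homogeneous. The seminorm itself is `x ↦ edist x 0`; for the scalar `0` homogeneity uses the
convention `0 * ∞ = 0` of `ℝ≥0∞`. -/
class IsGNormed (E : Type) [AddCommGroup E] [Module ℂ E] [PseudoEMetricSpace E] : Prop where
  edist_add_right : ∀ x y z : E, edist (x + z) (y + z) = edist x y
  edist_smul : ∀ (c : ℂ) (x y : E), edist (c • x) (c • y) = ‖c‖₊ * edist x y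

section GNormed

variable {E : Type} [AddCommGroup E] [Module ℂ E] [PseudoEMetricSpace E] [IsGNormed E]

theorem edist_eq_edist_sub_zero (x y : E) : edist x y = edist (x - y) 0 := by
  have := IsGNormed.edist_add_right (x - y) 0 y
  simpa using this

theorem edist_add_add_le' (x y x' y' : E) :
    edist (x + y) (x' + y') ≤ edist x x' + edist y y' := by
  refine (edist_triangle _ (x' + y) _).trans ?_
  rw [IsGNormed.edist_add_right, add_comm x' y, add_comm x' y', IsGNormed.edist_add_right]

theorem edist_add_zero_le (x y : E) : edist (x + y) 0 ≤ edist x 0 + edist y 0 := by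
  simpa using edist_add_add_le' x y 0 0

theorem edist_neg_neg' (x y : E) : edist (-x) (-y) = edist x y := by
  simpa using IsGNormed.edist_smul (-1 : ℂ) x y

theorem edist_smul_zero (c : ℂ) (x : E) : edist (c • x) 0 = ‖c‖₊ * edist x 0 := by
  simpa using IsGNormed.edist_smul c x 0

instance (priority := 50) : IsUniformAddGroup E := by
  refine ⟨EMetric.uniformContinuous_iff.2 fun ε hε => ?_⟩
  refine ⟨ε / 2, ENNReal.half_pos hε.ne', fun {a b} h => ?_⟩
  have h1 : edist a.1 b.1 < ε / 2 := (le_max_left _ _).trans_lt h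
  have h2 : edist a.2 b.2 < ε / 2 := (le_max_right _ _).trans_lt h
  rw [sub_eq_add_neg, sub_eq_add_neg]
  refine (edist_add_add_le' _ _ _ _).trans_lt ?_
  rw [edist_neg_neg']
  calc _ < ε / 2 + ε / 2 := ENNReal.add_lt_add h1 h2
    _ = ε := ENNReal.add_halves ε

instance (priority := 50) : UniformContinuousConstSMul ℂ E :=
  ⟨fun c => LipschitzWith.uniformContinuous (K := ‖c‖₊)
    fun x y => (IsGNormed.edist_smul c x y).le⟩

end GNormed

instance (W : GBanach) : IsGNormed W.carrier where
  edist_add_right x y z := by simp [W.edist_eq]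
  edist_smul c x y := by rw [W.edist_eq, W.edist_eq, ← smul_sub, W.enorm_smul]

theorem enorm_eq_edist (W : GBanach) (x : W.carrier) : W.enorm x = edist x 0 := by
  simp [W.edist_eq]

/-- A complete extended metric space with an invariant homogeneous metric, as a generalized Banach
space with norm `x ↦ edist x 0`. -/
def mkGBanach (E : Type) [AddCommGroup E] [Module ℂ E] [EMetricSpace E] [IsGNormed E]
    [CompleteSpace E] : GBanach where
  carrier := E
  enorm x := edist x 0
  enorm_eq_zero_iff _ := edist_eq_zero
  enorm_smul := edist_smul_zero
  enorm_add_le := edist_add_zero_le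
  edist_eq := edist_eq_edist_sub_zero

/-! ### Completion of an extended seminormed space -/

section Completion

variable (E : Type) [PseudoEMetricSpace E] [AddCommGroup E]

/-- The continuous extension of the extended seminorm `x ↦ edist x 0` to the uniform completion. -/
noncomputable def cnorm : Completion E → ℝ≥0∞ :=
  Completion.isDenseInducing_coe.extend fun x : E => edist x 0

variable {E}

/-- The seminorm has a limit, possibly `∞`, along the trace on `E` of the neighbourhoods of any point
of the completion. This trace is a Cauchy filter, so the upper and lower limits of the seminorm
coincide. -/
theorem exists_tendsto (z : Completion E) :
    ∃ c, Tendsto (fun x : E => edist x 0) (comap (↑) (𝓝 z)) (𝓝 c) := by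
  set f : Filter E := comap (↑) (𝓝 z) with hf
  have hne : f.NeBot := Completion.isDenseInducing_coe.comap_nhds_neBot z
  have hc : Cauchy f :=
    cauchy_nhds.comap' (Completion.isUniformInducing_coe E).comap_uniformity.le hne
  refine ⟨liminf (fun x : E => edist x 0) f, tendsto_of_le_liminf_of_limsup_le le_rfl ?_⟩
  refine ENNReal.le_of_forall_pos_le_add fun ε hε _ => ?_
  have hε2 : (0 : ℝ≥0∞) < ε / 2 := ENNReal.half_pos (by simpa using hε.ne')
  obtain ⟨s, hs, hd⟩ := (EMetric.cauchy_iff.1 hc).2 (ε / 2) hε2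
  obtain ⟨x₀, hx₀⟩ := hne.nonempty_of_mem hs
  have h1 : limsup (fun x : E => edist x 0) f ≤ edist x₀ 0 + ε / 2 := by
    refine limsup_le_of_le (by isBoundedDefault) ?_
    filter_upwards [hs] with x hx
    rw [add_comm]
    exact (edist_triangle x x₀ 0).trans (by gcongr; exact (hd x hx x₀ hx₀).le)
  have h2 : edist x₀ 0 - ε / 2 ≤ liminf (fun x : E => edist x 0) f := by
    refine le_liminf_of_le (by isBoundedDefault) ?_
    filter_upwards [hs] with x hx
    rw [tsub_le_iff_right, add_comm]
    exact (edist_triangle x₀ x 0).trans (by gcongr; exact (hd x₀ hx₀ x hx).le)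
  rw [tsub_le_iff_right] at h2
  calc _ ≤ _ := h1
    _ ≤ _ := add_le_add_left h2 _
    _ = _ := by rw [add_assoc, ENNReal.add_halves]

theorem continuous_cnorm : Continuous (cnorm E) :=
  Completion.isDenseInducing_coe.continuous_extend exists_tendsto

theorem cnorm_coe (x : E) : cnorm E x = edist x 0 :=
  Completion.isDenseInducing_coe.extend_eq (by fun_prop) x

theorem cnorm_zero : cnorm E 0 = 0 := by
  rw [← Completion.coe_zero, cnorm_coe, edist_self]

variable [Module ℂ E] [IsGNormed E]

theorem cnorm_smul (c : ℂ) (z : Completion E) : cnorm E (c • z) = ‖c‖₊ * cnorm E z := by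
  induction z using Completion.induction_on with
  | hp =>
    exact isClosed_eq (continuous_cnorm.comp (continuous_const_smul c))
      ((ENNReal.continuous_const_mul ENNReal.coe_ne_top).comp continuous_cnorm)
  | ih x => rw [← Completion.coe_smul, cnorm_coe, cnorm_coe, edist_smul_zero]

theorem cnorm_add_le (z w : Completion E) : cnorm E (z + w) ≤ cnorm E z + cnorm E w := by
  induction z, w using Completion.induction_on₂ with
  | hp =>
    exact isClosed_le (continuous_cnorm.comp continuous_add)
      ((continuous_cnorm.comp continuous_fst).add (continuous_cnorm.comp continuous_snd))
  | ih x y =>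
    rw [← Completion.coe_add, cnorm_coe, cnorm_coe, cnorm_coe]
    exact edist_add_zero_le x y

theorem cnorm_neg (z : Completion E) : cnorm E (-z) = cnorm E z := by
  simpa using cnorm_smul (-1) z

/-- The extended seminorm induces the topology of the completion at `0`: a closed neighbourhood
contains an open `cnorm`-ball as soon as it contains the points of `E` in that ball, by density. -/
theorem nhds_zero_hasBasis :
    (𝓝 (0 : Completion E)).HasBasis (fun ε : ℝ≥0∞ => 0 < ε) fun ε => {z | cnorm E z < ε} := by
  refine ⟨fun U => ⟨fun hU => ?_, ?_⟩⟩
  · obtain ⟨V, hV, hVc, hVU⟩ := exists_mem_nhds_isClosed_subset hU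
    have h : ((↑) : E → Completion E) ⁻¹' V ∈ 𝓝 (0 : E) :=
      (Completion.continuous_coe E).continuousAt (by simpa [Completion.coe_zero] using hV)
    obtain ⟨ε, hε, hb⟩ := EMetric.mem_nhds_iff.1 h
    refine ⟨ε, hε, fun z hz => hVU ?_⟩
    have ho : IsOpen {z | cnorm E z < ε} := isOpen_lt continuous_cnorm continuous_const
    have := Completion.denseRange_coe.open_subset_closure_inter ho hz
    refine closure_minimal ?_ hVc this
    rintro _ ⟨hw, x, rfl⟩
    exact hb (by simpa [cnorm_coe] using hw)
  · rintro ⟨ε, hε, h⟩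
    refine mem_of_superset ?_ h
    exact (isOpen_lt continuous_cnorm continuous_const).mem_nhds (by simpa [cnorm_zero] using hε)

/-- The completion with the extended metric of `cnorm`; its uniformity is by definition the one of
the uniform completion, so completeness carries over. -/
noncomputable instance : EMetricSpace (Completion E) where
  edist z w := cnorm E (z - w)
  edist_self z := by simp [cnorm_zero]
  edist_comm z w := by rw [← cnorm_neg, neg_sub]
  edist_triangle x y z := by simpa using cnorm_add_le (x - y) (y - z)
  toUniformSpace := inferInstance
  uniformity_edist := by
    have := (nhds_zero_hasBasis (E := E)).comap fun p : Completion E × Completion E => p.2 - p.1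
    rw [← uniformity_eq_comap_nhds_zero] at this
    rw [this.eq_biInf]
    refine iInf_congr fun ε => iInf_congr fun _ => congrArg _ ?_
    ext p
    change cnorm E _ < ε ↔ cnorm E _ < ε
    rw [← cnorm_neg, neg_sub]
  eq_of_edist_eq_zero := by
    intro x y h
    by_contra hne
    have h0 : ({x - y}ᶜ : Set (Completion E)) ∈ 𝓝 0 :=
      isOpen_compl_singleton.mem_nhds (by simpa [eq_comm, sub_eq_zero] using hne)
    obtain ⟨ε, hε, hs⟩ := nhds_zero_hasBasis.mem_iff.1 h0
    exact hs (show cnorm E (x - y) < ε from h ▸ hε) rfl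

theorem edist_completion (z w : Completion E) : edist z w = cnorm E (z - w) := rfl

instance : IsGNormed (Completion E) where
  edist_add_right x y z := by simp [edist_completion]
  edist_smul c x y := by rw [edist_completion, ← smul_sub, cnorm_smul, edist_completion]

end Completion

/-! ### The free generalized Banach space -/

theorem hom_edist_le {X Y : CMetInf} (φ : X ⟶ Y) (x y : X.carrier) :
    edist (φ.1 x) (φ.1 y) ≤ edist x y :=
  (φ.2 x y).trans_eq (one_mul _)

theorem hom_apply_eq {A B : CMetInf} {f g : A ⟶ B} (h : f = g) (a : A.carrier) : f.1 a = g.1 a :=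
  h ▸ rfl

section Free

/-- The free complex vector space on the points of `X`, a type synonym carrying the extended
seminorm `fnorm` below. -/
def FreeE (X : CMetInf) : Type := X.carrier →₀ ℂ

variable {X : CMetInf}

noncomputable instance : AddCommGroup (FreeE X) := inferInstanceAs (AddCommGroup (X.carrier →₀ ℂ))

noncomputable instance : Module ℂ (FreeE X) := inferInstanceAs (Module ℂ (X.carrier →₀ ℂ))

/-- The generator of the free vector space given by a point. -/
noncomputable def gen (x : X.carrier) : FreeE X := Finsupp.single x (1 : ℂ)

/-- The linear extension of a nonexpanding map. -/
noncomputable def lin {W : GBanach} (φ : X ⟶ Vinf.obj W) : FreeE X →ₗ[ℂ] W.carrier :=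
  Finsupp.linearCombination ℂ (M := W.carrier) φ.1

theorem lin_gen {W : GBanach} (φ : X ⟶ Vinf.obj W) (x : X.carrier) : lin φ (gen x) = φ.1 x :=
  (Finsupp.linearCombination_single ℂ (M := W.carrier) (v := φ.1) 1 x).trans (one_smul ℂ _)

theorem free_hom_ext {M : Type} [AddCommGroup M] [Module ℂ M] {f g : FreeE X →ₗ[ℂ] M}
    (h : ∀ x, f (gen x) = g (gen x)) : f = g :=
  Finsupp.lhom_ext' fun x => LinearMap.ext_ring (h x)

/-- The largest extended seminorm for which the linear extension of every nonexpanding map into a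
generalized Banach space has norm at most one, written as a supremum over all such maps. The
supremum runs over a proper class of spaces, which is harmless as its values lie in `ℝ≥0∞`. -/
noncomputable def fnorm (v : FreeE X) : ℝ≥0∞ :=
  ⨆ (W : GBanach) (φ : X ⟶ Vinf.obj W), edist (lin φ v) 0

theorem le_fnorm {W : GBanach} (φ : X ⟶ Vinf.obj W) (v : FreeE X) :
    edist (lin φ v) 0 ≤ fnorm v :=
  le_iSup₂_of_le W φ le_rfl

theorem fnorm_smul (c : ℂ) (v : FreeE X) : fnorm (c • v) = ‖c‖₊ * fnorm v := by
  simp only [fnorm, map_smul, edist_smul_zero, ENNReal.mul_iSup]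

noncomputable instance : PseudoEMetricSpace (FreeE X) where
  edist v w := fnorm (v - w)
  edist_self v := by simp [fnorm]
  edist_comm v w := by simpa using (fnorm_smul (-1) (w - v))
  edist_triangle u v w := by
    refine iSup₂_le fun W φ => ?_
    rw [← sub_add_sub_cancel u v w, map_add]
    exact (edist_add_zero_le _ _).trans (add_le_add (le_fnorm φ _) (le_fnorm φ _))

theorem edist_free (v w : FreeE X) : edist v w = fnorm (v - w) := rfl

instance : IsGNormed (FreeE X) where
  edist_add_right x y z := by simp [edist_free]
  edist_smul c x y := by rw [edist_free, ← smul_sub, fnorm_smul, edist_free]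

/-- The generators depend on the point in a nonexpanding way, so they form the unit of the
adjunction. -/
theorem edist_gen_le (x y : X.carrier) : edist (gen x) (gen y) ≤ edist x y := by
  refine iSup₂_le fun W φ => ?_
  rw [map_sub, ← edist_eq_edist_sub_zero (lin φ (gen x)), lin_gen, lin_gen]
  exact hom_edist_le φ x y

theorem lin_lipschitz {W : GBanach} (φ : X ⟶ Vinf.obj W) : LipschitzWith 1 (lin φ) :=
  LipschitzWith.of_edist_le fun v w => by
    rw [edist_eq_edist_sub_zero, ← map_sub]
    exact le_fnorm φ _

/-- The free generalized Banach space on `X`: the completion of the free vector space. -/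
noncomputable def freeObj (X : CMetInf) : GBanach := mkGBanach (Completion (FreeE X))

/-- The continuous extension of `lin φ` to the completion. -/
noncomputable def extFun {W : GBanach} (φ : X ⟶ Vinf.obj W) : Completion (FreeE X) → W.carrier :=
  Completion.extension (lin φ)

theorem extFun_coe {W : GBanach} (φ : X ⟶ Vinf.obj W) (v : FreeE X) : extFun φ v = lin φ v :=
  Completion.extension_coe (lin_lipschitz φ).uniformContinuous v

theorem continuous_extFun {W : GBanach} (φ : X ⟶ Vinf.obj W) : Continuous (extFun φ) :=
  Completion.continuous_extension

/-- The morphism out of the free generalized Banach space induced by a nonexpanding map. -/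
noncomputable def extHom {W : GBanach} (φ : X ⟶ Vinf.obj W) : freeObj X ⟶ W :=
  ⟨{ toFun := extFun φ
     map_add' := fun z w => by
      refine Completion.induction_on₂ (p := fun z w : Completion (FreeE X) =>
        extFun φ (z + w) = extFun φ z + extFun φ w) z w ?_ ?_
      · exact isClosed_eq ((continuous_extFun φ).comp continuous_add)
          (((continuous_extFun φ).comp continuous_fst).add
            ((continuous_extFun φ).comp continuous_snd))
      · intro v w
        rw [← Completion.coe_add, extFun_coe, extFun_coe, extFun_coe, map_add]
     map_smul' := fun c z => by
      refine Completion.induction_on (p := fun z : Completion (FreeE X) =>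
        extFun φ (c • z) = c • extFun φ z) z ?_ ?_
      · exact isClosed_eq ((continuous_extFun φ).comp (continuous_const_smul c))
          ((continuous_extFun φ).const_smul c)
      · intro v
        rw [← Completion.coe_smul, extFun_coe, extFun_coe, map_smul] },
  fun z => by
    rw [enorm_eq_edist]
    refine Completion.induction_on (p := fun z : Completion (FreeE X) =>
      edist (extFun φ z) 0 ≤ edist z 0) z ?_ ?_
    · exact isClosed_le ((continuous_extFun φ).edist continuous_const)
        (continuous_id.edist continuous_const)
    · intro v
      rw [extFun_coe, edist_completion, sub_zero, cnorm_coe, edist_free, sub_zero]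
      exact le_fnorm φ v⟩

/-- The unit of the adjunction. -/
noncomputable def unitHom (X : CMetInf) : X ⟶ Vinf.obj (freeObj X) :=
  ⟨fun x => (gen x : Completion (FreeE X)), LipschitzWith.of_edist_le fun x y => by
    change edist (gen x : Completion (FreeE X)) (gen y) ≤ _
    rw [edist_completion, ← Completion.coe_sub, cnorm_coe, ← edist_eq_edist_sub_zero]
    exact edist_gen_le x y⟩

/-- The universal property of the free generalized Banach space. -/
noncomputable def homEquiv (X : CMetInf) (W : GBanach) :
    (freeObj X ⟶ W) ≃ (X ⟶ Vinf.obj W) where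
  toFun g := unitHom X ≫ Vinf.map g
  invFun φ := extHom φ
  left_inv g := by
    refine Subtype.ext (LinearMap.ext fun z => ?_)
    have hg : Continuous fun z : Completion (FreeE X) => g.1 z := (Vinf.map g).2.continuous
    refine Completion.induction_on (p := fun z : Completion (FreeE X) =>
        extFun (unitHom X ≫ Vinf.map g) z = g.1 z) z ?_ ?_
    · exact isClosed_eq (continuous_extFun _) hg
    · intro v
      rw [extFun_coe]
      let k : FreeE X →ₗ[ℂ] W.carrier :=
        { toFun := fun v => g.1 (v : Completion (FreeE X))
          map_add' := fun v w => by
            rw [Completion.coe_add]; exact map_add g.1 _ _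
          map_smul' := fun c v => by
            rw [Completion.coe_smul]; exact map_smul g.1 _ _ }
      exact LinearMap.congr_fun (free_hom_ext (f := lin _) (g := k) fun x => lin_gen _ x) v
  right_inv φ := by
    refine Subtype.ext (funext fun x => ?_)
    exact (extFun_coe φ (gen x)).trans (lin_gen φ x)

/-- The adjunction between the free functor and `Vinf`. -/
noncomputable def adj :
    Adjunction.leftAdjointOfEquiv (G := Vinf) homEquiv (fun _ _ _ _ _ => rfl) ⊣ Vinf :=
  Adjunction.adjunctionOfEquivLeft homEquiv _

end Free

/-! ### Coequalizers of split pairs -/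

section Coequalizer

/-- A metric retract `Z` of a generalized Banach space `B`, with retraction `h` and section `s`, for
which the kernel relation of `h` is a linear congruence. The congruence condition is expressed by
letting `s ∘ h` replace the arguments of the linear operations under `h`. -/
structure Retract (B : GBanach) (Z : CMetInf) where
  h : B.carrier → Z.carrier
  s : Z.carrier → B.carrier
  h_lip : ∀ x y, edist (h x) (h y) ≤ edist x y
  s_lip : ∀ x y, edist (s x) (s y) ≤ edist x y
  h_s : ∀ z, h (s z) = z
  h_add : ∀ b d, h (b + d) = h (s (h b) + s (h d))
  h_smul : ∀ (c : ℂ) b, h (c • b) = h (c • s (h b))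

namespace Retract

variable {B : GBanach} {Z : CMetInf} (R : Retract B Z)

/-- The underlying set of the retract, a type synonym carrying the linear structure pushed forward
along `h`. -/
def Carrier (_ : Retract B Z) : Type := Z.carrier

instance : EMetricSpace R.Carrier := inferInstanceAs (EMetricSpace Z.carrier)

instance : CompleteSpace R.Carrier := inferInstanceAs (CompleteSpace Z.carrier)

def proj (b : B.carrier) : R.Carrier := R.h b

def sec (z : R.Carrier) : B.carrier := R.s z

theorem proj_sec (z : R.Carrier) : R.proj (R.sec z) = z := R.h_s z

theorem surj : Function.Surjective R.proj := fun z => ⟨R.sec z, R.h_s z⟩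

instance : Zero R.Carrier := ⟨R.proj 0⟩
instance : Add R.Carrier := ⟨fun z w => R.proj (R.sec z + R.sec w)⟩
instance : SMul ℂ R.Carrier := ⟨fun c z => R.proj (c • R.sec z)⟩
instance : Neg R.Carrier := ⟨fun z => (-1 : ℂ) • z⟩
instance : Sub R.Carrier := ⟨fun z w => z + -w⟩
instance : SMul ℕ R.Carrier := ⟨fun n z => (n : ℂ) • z⟩
instance : SMul ℤ R.Carrier := ⟨fun n z => (n : ℂ) • z⟩

theorem proj_add (b d : B.carrier) : R.proj (b + d) = R.proj b + R.proj d := R.h_add b d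

theorem proj_smul (c : ℂ) (b : B.carrier) : R.proj (c • b) = c • R.proj b := R.h_smul c b

theorem proj_neg (b : B.carrier) : R.proj (-b) = -R.proj b := by
  rw [← neg_one_smul ℂ b, proj_smul]; rfl

instance : AddCommGroup R.Carrier :=
  R.surj.addCommGroup R.proj rfl R.proj_add R.proj_neg
    (fun b d => by rw [sub_eq_add_neg, proj_add, proj_neg]; rfl)
    (fun b n => by rw [← Nat.cast_smul_eq_nsmul ℂ n b, proj_smul]; rfl)
    (fun b n => by rw [← Int.cast_smul_eq_zsmul ℂ n b, proj_smul]; rfl)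

def projHom : B.carrier →+ R.Carrier := ⟨⟨R.proj, rfl⟩, R.proj_add⟩

instance : Module ℂ R.Carrier := R.surj.module ℂ R.projHom R.proj_smul

/-- Addition of `z` on the retract is a composite of `s`, a translation of `B` and `h`, hence is
nonexpanding. Applied also to `-z`, this yields translation invariance. -/
theorem edist_add_right_le (x y z : R.Carrier) : edist (x + z) (y + z) ≤ edist x y :=
  (R.h_lip _ _).trans <| (IsGNormed.edist_add_right _ _ _).trans_le (R.s_lip x y)

theorem edist_smul_le (c : ℂ) (x y : R.Carrier) :
    edist (c • x) (c • y) ≤ ‖c‖₊ * edist x y :=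
  (R.h_lip _ _).trans <| (IsGNormed.edist_smul c _ _).trans_le <| by
    gcongr; exact R.s_lip x y

instance : IsGNormed R.Carrier where
  edist_add_right x y z := by
    refine le_antisymm (R.edist_add_right_le x y z) ?_
    simpa using R.edist_add_right_le (x + z) (y + z) (-z)
  edist_smul c x y := by
    rcases eq_or_ne c 0 with rfl | hc
    · simp
    refine le_antisymm (R.edist_smul_le c x y) ?_
    have h := R.edist_smul_le c⁻¹ (c • x) (c • y)
    rw [inv_smul_smul₀ hc, inv_smul_smul₀ hc] at h
    calc (‖c‖₊ : ℝ≥0∞) * edist x y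
        ≤ ‖c‖₊ * (‖c⁻¹‖₊ * edist (c • x) (c • y)) := by gcongr
      _ = edist (c • x) (c • y) := by
        rw [← mul_assoc, ← ENNReal.coe_mul, ← nnnorm_mul, mul_inv_cancel₀ hc]
        simp

/-- The retract as a generalized Banach space; its underlying metric space is `Z`. -/
def obj : GBanach := mkGBanach R.Carrier

/-- The retraction as a morphism of generalized Banach spaces. -/
def π : B ⟶ R.obj :=
  ⟨{ R.projHom with map_smul' := R.proj_smul }, fun b => by
    rw [enorm_eq_edist, enorm_eq_edist]
    exact R.h_lip b 0⟩

end Retract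

variable {A B : GBanach} {f g : A ⟶ B} {Z : CMetInf} {h : Vinf.obj B ⟶ Z}

/-- The splitting of the underlying pair exhibits its coequalizer as a retract satisfying the
congruence condition: with `t` the left section, `h (b + d) = h (g (t b + t d))` and
`h (s (h b) + s (h d)) = h (f (t b + t d))`, and similarly for scalar multiplication. -/
def retractOfSplit (q : IsSplitCoequalizer (Vinf.map f) (Vinf.map g) h) : Retract B Z :=
  let t : B.carrier → A.carrier := q.leftSection.1
  have key (a : A.carrier) : h.1 (f.1 a) = h.1 (g.1 a) := hom_apply_eq q.condition a
  have gt (b : B.carrier) : g.1 (t b) = b := hom_apply_eq q.leftSection_bottom b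
  have ft (b : B.carrier) : f.1 (t b) = q.rightSection.1 (h.1 b) :=
    hom_apply_eq q.leftSection_top b
  { h := h.1
    s := q.rightSection.1
    h_lip := hom_edist_le h
    s_lip := hom_edist_le q.rightSection
    h_s := fun z => hom_apply_eq q.rightSection_π z
    h_add := fun b d => by
      have := key (t b + t d)
      rw [map_add, map_add, gt, gt, ft, ft] at this
      exact this.symm
    h_smul := fun c b => by
      have := key (c • t b)
      rw [map_smul, map_smul, gt, ft] at this
      exact this.symm }

variable (q : IsSplitCoequalizer (Vinf.map f) (Vinf.map g) h)

theorem condition : f ≫ (retractOfSplit q).π = g ≫ (retractOfSplit q).π :=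
  Subtype.ext (LinearMap.ext fun a => hom_apply_eq q.condition a)

/-- The coequalizer of the underlying split pair lifts to a coequalizer in generalized Banach
spaces. -/
def isColimit : Limits.IsColimit (Limits.Cofork.ofπ (retractOfSplit q).π (condition q)) :=
  Limits.Cofork.IsColimit.mk' _ fun c => by
    let R := retractOfSplit q
    -- The descended map is `c.π ∘ s`; it is linear because `c.π ∘ s ∘ h = c.π`.
    have hk (b : B.carrier) : c.π.1 (R.sec (R.proj b)) = c.π.1 b := by
      have e := congrArg (fun k => k.1 (q.leftSection.1 b : A.carrier)) c.condition
      have gt : g.1 (q.leftSection.1 b) = b := hom_apply_eq q.leftSection_bottom b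
      have ft : f.1 (q.leftSection.1 b) = q.rightSection.1 (h.1 b) :=
        hom_apply_eq q.leftSection_top b
      change c.π.1 (f.1 _) = c.π.1 (g.1 _) at e
      rw [gt, ft] at e
      exact e
    let d : R.obj ⟶ c.pt :=
      ⟨{ toFun := fun z => c.π.1 (R.sec z)
         map_add' := fun z w => (hk _).trans (map_add _ _ _)
         map_smul' := fun r z => (hk _).trans (map_smul _ _ _) }, fun z => by
        rw [enorm_eq_edist, enorm_eq_edist]
        have h0 : c.π.1 (R.sec 0) = 0 := (hk 0).trans (map_zero _)
        have h2 : edist (c.π.1 (R.sec z)) (c.π.1 (R.sec 0)) ≤ edist z 0 :=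
          (hom_edist_le (Vinf.map c.π) _ _).trans (R.s_lip z (R.proj 0))
        rwa [h0] at h2⟩
    refine ⟨d, Subtype.ext (LinearMap.ext hk), fun {m} hm => ?_⟩
    refine Subtype.ext (LinearMap.ext fun z => ?_)
    have := congrArg (fun k => k.1 (R.sec z)) hm
    refine Eq.trans ?_ this
    exact congrArg m.1 (R.proj_sec z).symm

end Coequalizer

instance : Monad.HasCoequalizerOfIsSplitPair Vinf where
  out f g hs := by
    obtain ⟨Z, h, ⟨q⟩⟩ := hs.splittable
    exact ⟨⟨_, isColimit q⟩⟩

instance : Monad.PreservesColimitOfIsSplitPair Vinf where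
  out f g hs := by
    obtain ⟨Z, h, ⟨q⟩⟩ := hs.splittable
    exact Limits.preservesColimit_of_preserves_colimit_cocone (isColimit q)
      ((Limits.isColimitMapCoconeCoforkEquiv Vinf (condition q)).symm q.isCoequalizer)

instance : Vinf.ReflectsIsomorphisms where
  reflects {A B} f hf := by
    obtain ⟨i, h1, h2⟩ := hf
    let k : B.carrier → A.carrier := i.1
    have h1 (a : A.carrier) : k (f.1 a) = a := hom_apply_eq h1 a
    have h2 (b : B.carrier) : f.1 (k b) = b := hom_apply_eq h2 b
    have hinj : Function.Injective f.1 := Function.LeftInverse.injective h1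
    have h0 : k 0 = 0 := hinj (by rw [h2, map_zero])
    refine ⟨⟨{ toFun := k
               map_add' := fun x y => hinj (by rw [h2, map_add, h2, h2])
               map_smul' := fun c x => hinj (by rw [h2, RingHom.id_apply, map_smul, h2]) },
      fun b => ?_⟩, ?_, ?_⟩
    · rw [enorm_eq_edist, enorm_eq_edist]
      have : edist (k b) (k 0) ≤ edist b 0 := hom_edist_le i b (0 : B.carrier)
      rwa [h0] at this
    · exact Subtype.ext (LinearMap.ext h1)
    · exact Subtype.ext (LinearMap.ext h2)

end VinfMonadic

/-- The forgetful functor `V_∞ : Ban_∞ ⥤ CMet_∞` is monadic. -/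
theorem Vinf_monadic : Nonempty (MonadicRightAdjoint Vinf) :=
  ⟨Monad.monadicOfHasPreservesGSplitCoequalizersOfReflectsIsomorphisms VinfMonadic.adj⟩
end

section
/- The forgetful functor V• : Ban → CMet•, sending a complex Banach space to its underlying complete metric space pointed at 0 and a contractive linear map to itself regarded as a basepoint-preserving nonexpanding map, is monadic: it has a left adjoint and the comparison functor from Ban to the Eilenberg–Moore category of the induced monad is an equivalence of categories. -/
/-!
The left adjoint is the Lipschitz-free space of Arens and Eells, and monadicity is Beck's theorem.

Let `Lip X` be the set of basepoint-preserving nonexpanding functions `X → ℂ`. The free space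
`FreeBan X` is the closed span, in the bounded functions on `Lip X`, of the evaluations `δ x`.
A Banach space `B` embeds isometrically (`evalDual`, by Hahn–Banach) as a closed subspace of the
bounded functions on the unit ball of its dual. A morphism `φ : X ⟶ Vp.obj B` induces by
precomposition `u ↦ (g ↦ u (g ∘ φ))` a contraction which sends `δ x` to the image of `φ x`, hence
sends all of `FreeBan X` into the closed image of `B`; this is the extension of `φ`, and it is
unique because the `δ x` have dense span.

For Beck's theorem, let `f g : A ⟶ B` be a pair in `Ban` whose underlying pair is split in `CMet•`
by `q : B → Q`, `s : Q → B`, `t : B → A`, with `q ∘ f = q ∘ g`, `q ∘ s = id`, `g ∘ t = id` and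
`f ∘ t = s ∘ q`. Then
`q (b + c) = q (g (t b + t c)) = q (f (t b + t c)) = q (s (q b) + s (q c))`,
and similarly for scalar multiples, so that `q` transports the vector space structure of `B` to `Q`
(`SplitQuotient`). Because `q` and `s` are nonexpanding, the metric of `Q` is translation invariant
and homogeneous, so that it comes from a norm. Thus `Q` is a Banach space, and `q` is the
coequalizer in `Ban`.
-/

open CategoryTheory

/-- The category `Ban` of complex Banach spaces and linear maps of norm `≤ 1`. -/
structure Ban : Type 1 where
  carrier : Type
  [grp : NormedAddCommGroup carrier]
  [mod : NormedSpace ℂ carrier]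
  [compl : CompleteSpace carrier]

attribute [instance] Ban.grp Ban.mod Ban.compl

instance : Category Ban where
  Hom X Y := { f : X.carrier →L[ℂ] Y.carrier // ‖f‖ ≤ 1 }
  id X := ⟨ContinuousLinearMap.id ℂ X.carrier, ContinuousLinearMap.norm_id_le⟩
  comp f g := ⟨g.1.comp f.1,
    le_trans (ContinuousLinearMap.opNorm_comp_le _ _)
      (by calc ‖g.1‖ * ‖f.1‖ ≤ 1 * 1 := mul_le_mul g.2 f.2 (norm_nonneg _) zero_le_one
          _ = 1 := mul_one 1)⟩
  id_comp f := Subtype.ext (ContinuousLinearMap.comp_id _)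
  comp_id f := Subtype.ext (ContinuousLinearMap.id_comp _)
  assoc f g h := Subtype.ext ((ContinuousLinearMap.comp_assoc _ _ _))
/-- The category `CMet•` of pointed complete metric spaces and basepoint-preserving
nonexpanding maps. -/
structure PCMet : Type 1 where
  carrier : Type
  [met : MetricSpace carrier]
  [compl : CompleteSpace carrier]
  pt : carrier

attribute [instance] PCMet.met PCMet.compl

instance : Category PCMet where
  Hom X Y := { f : X.carrier → Y.carrier // LipschitzWith 1 f ∧ f X.pt = Y.pt }
  id X := ⟨id, LipschitzWith.id, rfl⟩
  comp f g := ⟨g.1 ∘ f.1, by simpa using g.2.1.comp f.2.1,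
    by rw [Function.comp_apply, f.2.2, g.2.2]⟩
  id_comp f := Subtype.ext rfl
  comp_id f := Subtype.ext rfl
  assoc f g h := Subtype.ext rfl

/-- The forgetful functor `V• : Ban ⥤ CMet•`, sending a Banach space to its underlying
complete metric space pointed at `0`. -/
def Vp : Ban ⥤ PCMet where
  obj X := { carrier := X.carrier, pt := 0 }
  map {X Y} f := ⟨f.1,
    f.1.lipschitz.weaken (show ‖f.1‖₊ ≤ 1 by exact_mod_cast f.2),
    map_zero f.1⟩
  map_id X := Subtype.ext rfl
  map_comp f g := Subtype.ext rfl

open CategoryTheory.Limits CategoryTheory.Monad Topology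

/-! ### The Lipschitz-free space -/

/-- The basepoint-preserving nonexpanding functions `X → ℂ`. -/
def Lip (X : PCMet) : Type := { f : X.carrier → ℂ // LipschitzWith 1 f ∧ f X.pt = 0 }

/-- `Lip X` is a mere index set: with the discrete topology, bounded continuous functions on it
are all the bounded functions. -/
instance (X : PCMet) : TopologicalSpace (Lip X) := ⊥

instance (X : PCMet) : DiscreteTopology (Lip X) := ⟨rfl⟩

theorem Lip.norm_sub_le {X : PCMet} (f : Lip X) (x y : X.carrier) :
    ‖f.1 x - f.1 y‖ ≤ dist x y := by
  simpa [dist_eq_norm] using f.2.1.dist_le_mul x y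

/-- Evaluation at a point of `X`, as a bounded function on `Lip X`. -/
noncomputable def deltaFun (X : PCMet) (x : X.carrier) : BoundedContinuousFunction (Lip X) ℂ :=
  BoundedContinuousFunction.ofNormedAddCommGroupDiscrete (fun f => f.1 x) (dist x X.pt)
    fun f => by simpa [f.2.2] using f.norm_sub_le x X.pt

@[simp] theorem deltaFun_apply (X : PCMet) (x : X.carrier) (f : Lip X) :
    deltaFun X x f = f.1 x := rfl

/-- The Lipschitz-free space of `X`: the closed span of the evaluations. -/
noncomputable def freeSub (X : PCMet) : Submodule ℂ (BoundedContinuousFunction (Lip X) ℂ) :=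
  (Submodule.span ℂ (Set.range (deltaFun X))).topologicalClosure

/-- The Lipschitz-free space of `X`, as an object of `Ban`. -/
noncomputable def FreeBan (X : PCMet) : Ban :=
  haveI : CompleteSpace (freeSub X) :=
    (Submodule.isClosed_topologicalClosure _).completeSpace_coe
  { carrier := freeSub X }

/-- The canonical map from `X` to its Lipschitz-free space; it is the unit of the adjunction. -/
noncomputable def delta (X : PCMet) : X ⟶ Vp.obj (FreeBan X) :=
  ⟨fun x => (⟨deltaFun X x,
      Submodule.le_topologicalClosure _ (Submodule.subset_span ⟨x, rfl⟩)⟩ : freeSub X), by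
    refine ⟨LipschitzWith.of_dist_le_mul fun x y => ?_, ?_⟩
    · change dist (deltaFun X x) (deltaFun X y) ≤ _
      rw [dist_eq_norm, BoundedContinuousFunction.norm_le (by positivity)]
      intro f
      simpa using f.norm_sub_le x y
    · refine Subtype.ext (BoundedContinuousFunction.ext fun f => ?_)
      exact f.2.2⟩

/-! ### The universal property -/

/-- The functionals of norm at most one on `B`. -/
def DualBall (B : Ban) : Type := { g : StrongDual ℂ B.carrier // ‖g‖ ≤ 1 }

instance (B : Ban) : TopologicalSpace (DualBall B) := ⊥

instance (B : Ban) : DiscreteTopology (DualBall B) := ⟨rfl⟩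

theorem DualBall.norm_apply_le {B : Ban} (g : DualBall B) (b : B.carrier) : ‖g.1 b‖ ≤ ‖b‖ := by
  simpa using g.1.le_of_opNorm_le g.2 b

/-- The isometric embedding of a Banach space in the bounded functions on its dual ball. -/
noncomputable def evalDual (B : Ban) :
    B.carrier →ₗᵢ[ℂ] BoundedContinuousFunction (DualBall B) ℂ where
  toFun b := BoundedContinuousFunction.ofNormedAddCommGroupDiscrete (fun g => g.1 b) ‖b‖
    fun g => g.norm_apply_le b
  map_add' a b := by ext g; exact map_add g.1 a b
  map_smul' c b := by ext g; exact map_smul g.1 c b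
  norm_map' b := by
    apply le_antisymm
    · exact (BoundedContinuousFunction.norm_le (norm_nonneg b)).2 fun g => g.norm_apply_le b
    · obtain ⟨g, hg, hb⟩ := exists_dual_vector'' ℂ b
      have h := BoundedContinuousFunction.norm_coe_le_norm
        (BoundedContinuousFunction.ofNormedAddCommGroupDiscrete
          (fun g : DualBall B => g.1 b) ‖b‖ fun g => g.norm_apply_le b) ⟨g, hg⟩
      simpa [hb] using h

theorem evalDual_apply (B : Ban) (b : B.carrier) (g : DualBall B) : evalDual B b g = g.1 b := rfl

/-- Precomposition of a functional with a morphism `X ⟶ Vp.obj B`. -/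
noncomputable def pullLip {X : PCMet} {B : Ban} (φ : X ⟶ Vp.obj B) (g : DualBall B) : Lip X :=
  ⟨fun x => g.1 (φ.1 x), by
    refine ⟨?_, ?_⟩
    · have hg : LipschitzWith 1 g.1 :=
        g.1.lipschitz.weaken (show ‖g.1‖₊ ≤ 1 by exact_mod_cast g.2)
      have h := hg.comp φ.2.1
      rw [one_mul] at h
      exact h
    · change g.1 (φ.1 X.pt) = 0
      rw [φ.2.2]
      exact map_zero g.1⟩

/-- The contraction `u ↦ (g ↦ u (g ∘ φ))` induced by `φ`. -/
noncomputable def pushLip {X : PCMet} {B : Ban} (φ : X ⟶ Vp.obj B) :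
    BoundedContinuousFunction (Lip X) ℂ →L[ℂ] BoundedContinuousFunction (DualBall B) ℂ :=
  LinearMap.mkContinuous
    { toFun := fun u => u.compContinuous ⟨pullLip φ, continuous_of_discreteTopology⟩
      map_add' := fun _ _ => rfl
      map_smul' := fun _ _ => rfl } 1 fun u => by
    rw [one_mul, BoundedContinuousFunction.norm_le (norm_nonneg u)]
    exact fun g => u.norm_coe_le_norm _

theorem pushLip_apply {X : PCMet} {B : Ban} (φ : X ⟶ Vp.obj B)
    (u : BoundedContinuousFunction (Lip X) ℂ) (g : DualBall B) :
    pushLip φ u g = u (pullLip φ g) := rfl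

theorem norm_pushLip_le {X : PCMet} {B : Ban} (φ : X ⟶ Vp.obj B)
    (u : BoundedContinuousFunction (Lip X) ℂ) : ‖pushLip φ u‖ ≤ ‖u‖ :=
  (BoundedContinuousFunction.norm_le (norm_nonneg u)).2 fun _ => u.norm_coe_le_norm _

theorem pushLip_deltaFun {X : PCMet} {B : Ban} (φ : X ⟶ Vp.obj B) (x : X.carrier) :
    pushLip φ (deltaFun X x) = evalDual B (φ.1 x) := rfl

theorem pushLip_mem_range {X : PCMet} {B : Ban} (φ : X ⟶ Vp.obj B) (u : freeSub X) :
    pushLip φ u.1 ∈ LinearMap.range (evalDual B).toLinearMap := by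
  have hcl : IsClosed (LinearMap.range (evalDual B).toLinearMap :
      Set (BoundedContinuousFunction (DualBall B) ℂ)) :=
    (evalDual B).isometry.isClosedEmbedding.isClosed_range
  have h : freeSub X ≤
      (LinearMap.range (evalDual B).toLinearMap).comap (pushLip φ).toLinearMap := by
    refine Submodule.topologicalClosure_minimal _ (Submodule.span_le.2 ?_)
      (hcl.preimage (pushLip φ).continuous)
    rintro _ ⟨x, rfl⟩
    exact ⟨φ.1 x, rfl⟩
  exact h u.2

/-- The extension of `φ` to a linear contraction on the free space. -/
noncomputable def extend {X : PCMet} {B : Ban} (φ : X ⟶ Vp.obj B) : FreeBan X ⟶ B :=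
  let T : freeSub X →ₗ[ℂ] B.carrier :=
    (evalDual B).equivRange.symm.toLinearEquiv.toLinearMap ∘ₗ
      LinearMap.codRestrict (LinearMap.range (evalDual B).toLinearMap)
        ((pushLip φ).toLinearMap ∘ₗ (freeSub X).subtype) (pushLip_mem_range φ)
  have hT : ∀ u, ‖T u‖ ≤ 1 * ‖u‖ := fun u => by
    rw [one_mul]
    refine le_trans (le_of_eq ?_) (norm_pushLip_le φ u.1)
    exact (evalDual B).equivRange.symm.norm_map _
  ⟨LinearMap.mkContinuous T 1 hT, LinearMap.mkContinuous_norm_le T zero_le_one hT⟩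

theorem evalDual_extend {X : PCMet} {B : Ban} (φ : X ⟶ Vp.obj B) (u : freeSub X) :
    evalDual B ((extend φ).1 u) = pushLip φ u.1 :=
  congrArg Subtype.val ((evalDual B).equivRange.apply_symm_apply
    ⟨pushLip φ u.1, pushLip_mem_range φ u⟩)

theorem extend_delta {X : PCMet} {B : Ban} (φ : X ⟶ Vp.obj B) (x : X.carrier) :
    (extend φ).1 ((delta X).1 x) = φ.1 x :=
  (evalDual B).injective ((evalDual_extend φ _).trans (pushLip_deltaFun φ x))

/-- A morphism out of the free space is determined by its values on the evaluations. -/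
theorem freeBan_hom_ext {X : PCMet} {B : Ban} {h k : FreeBan X ⟶ B}
    (e : ∀ x, h.1 ((delta X).1 x) = k.1 ((delta X).1 x)) : h = k := by
  let h' : freeSub X →L[ℂ] B.carrier := h.1
  let k' : freeSub X →L[ℂ] B.carrier := k.1
  have key : ∀ u (hu : u ∈ freeSub X), h' ⟨u, hu⟩ = k' ⟨u, hu⟩ := by
    -- The locus of agreement is closed in the closed subspace `freeSub X`, hence closed.
    have : freeSub X ≤ (LinearMap.eqLocus h'.toLinearMap k'.toLinearMap).map
        (freeSub X).subtype := by
      refine Submodule.topologicalClosure_minimal _ (Submodule.span_le.2 ?_) ?_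
      · rintro _ ⟨x, rfl⟩
        exact ⟨(delta X).1 x, e x, rfl⟩
      · exact (Submodule.isClosed_topologicalClosure _).isClosedEmbedding_subtypeVal.isClosedMap _
          (isClosed_eq h'.continuous k'.continuous)
    intro u hu
    obtain ⟨v, hv, rfl⟩ := this hu
    exact hv
  exact Subtype.ext (ContinuousLinearMap.ext fun u => key u.1 u.2)

/-- The universal property of the free space. -/
noncomputable def freeEquiv (X : PCMet) (B : Ban) : (FreeBan X ⟶ B) ≃ (X ⟶ Vp.obj B) where
  toFun h := delta X ≫ Vp.map h
  invFun := extend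
  left_inv _ := freeBan_hom_ext fun x => extend_delta _ x
  right_inv φ := Subtype.ext (funext fun x => extend_delta φ x)

theorem freeEquiv_naturality (X : PCMet) (B C : Ban) (g : B ⟶ C) (h : FreeBan X ⟶ B) :
    freeEquiv X C (h ≫ g) = freeEquiv X B h ≫ Vp.map g := rfl

/-- The free functor is left adjoint to `Vp`. -/
noncomputable def freeAdj : Adjunction.leftAdjointOfEquiv freeEquiv freeEquiv_naturality ⊣ Vp :=
  Adjunction.adjunctionOfEquivLeft freeEquiv freeEquiv_naturality

/-! ### Banach space structure on a split quotient -/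

/-- A retraction `q` of a Banach space `E` onto a pointed metric space `Q`, with section `s`, whose
fibres are compatible with the vector space operations. -/
structure SplitQuotient (E : Type) [NormedAddCommGroup E] [NormedSpace ℂ E] (Q : Type)
    [MetricSpace Q] (pt : Q) where
  q : E → Q
  s : Q → E
  q_lip : LipschitzWith 1 q
  s_lip : LipschitzWith 1 s
  q_zero : q 0 = pt
  s_pt : s pt = 0
  q_s : ∀ x, q (s x) = x
  q_add : ∀ a b, q (a + b) = q (s (q a) + s (q b))
  q_smul : ∀ (c : ℂ) a, q (c • a) = q (c • s (q a))

namespace SplitQuotient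

variable {E : Type} [NormedAddCommGroup E] [NormedSpace ℂ E] {Q : Type} [MetricSpace Q] {pt : Q}
  (S : SplitQuotient E Q pt)

theorem dist_q_le (a b : E) : dist (S.q a) (S.q b) ≤ dist a b := by
  simpa using S.q_lip.dist_le_mul a b

theorem dist_s_le (x y : Q) : dist (S.s x) (S.s y) ≤ dist x y := by
  simpa using S.s_lip.dist_le_mul x y

/-- The addition transported to `Q`. -/
def add (x y : Q) : Q := S.q (S.s x + S.s y)

/-- The scalar multiplication transported to `Q`. -/
def smul (c : ℂ) (x : Q) : Q := S.q (c • S.s x)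

theorem add_q (a b : E) : S.add (S.q a) (S.q b) = S.q (a + b) := (S.q_add a b).symm

theorem smul_q (c : ℂ) (a : E) : S.smul c (S.q a) = S.q (c • a) := (S.q_smul c a).symm

theorem add_assoc' (x y z : Q) : S.add (S.add x y) z = S.add x (S.add y z) := by
  rw [← S.q_s x, ← S.q_s y, ← S.q_s z]
  simp only [add_q, add_assoc]

theorem add_comm' (x y : Q) : S.add x y = S.add y x := by
  simp only [add, add_comm]

theorem pt_add (x : Q) : S.add pt x = x := by
  simp [add, S.s_pt, S.q_s]

theorem neg_add' (x : Q) : S.add (S.smul (-1) x) x = pt := by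
  rw [← S.q_s x, smul_q, add_q]
  simp [S.q_zero]

theorem dist_add_le (z x y : Q) : dist (S.add z x) (S.add z y) ≤ dist x y :=
  (S.dist_q_le _ _).trans (by rw [dist_add_left]; exact S.dist_s_le x y)

/-- The normed group structure on `Q`, with its given metric and with zero the basepoint. -/
@[reducible] def normedAddCommGroup : NormedAddCommGroup Q where
  add := S.add
  zero := pt
  neg := S.smul (-1)
  norm x := dist x pt
  add_assoc := S.add_assoc'
  zero_add := S.pt_add
  add_zero x := (S.add_comm' x pt).trans (S.pt_add x)
  add_comm := S.add_comm'
  neg_add_cancel := S.neg_add'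
  nsmul := @nsmulRec Q ⟨pt⟩ ⟨S.add⟩
  zsmul := @zsmulRec Q ⟨pt⟩ ⟨S.add⟩ ⟨S.smul (-1)⟩ (@nsmulRec Q ⟨pt⟩ ⟨S.add⟩)
  toMetricSpace := inferInstance
  dist_eq x y := by
    change dist x y = dist (S.add (S.smul (-1) x) y) pt
    apply le_antisymm
    · have h := S.dist_add_le x pt (S.add (S.smul (-1) x) y)
      rwa [← S.add_assoc', S.add_comm' x (S.smul _ _), S.neg_add', S.pt_add, S.add_comm' x pt,
        S.pt_add, dist_comm pt] at h
    · have h := S.dist_add_le (S.smul (-1) x) y x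
      rwa [S.neg_add', dist_comm y] at h

/-- The normed space structure on `Q`. -/
@[reducible] def normedSpace :
    letI := S.normedAddCommGroup
    NormedSpace ℂ Q :=
  letI := S.normedAddCommGroup
  { smul := S.smul
    one_smul := fun x => by
      change S.smul 1 x = x
      simp [smul, S.q_s]
    mul_smul := fun c d x => by
      change S.smul (c * d) x = S.smul c (S.smul d x)
      rw [← S.q_s x]
      simp only [smul_q, mul_smul]
    smul_zero := fun c => by
      change S.smul c pt = pt
      simp [smul, S.s_pt, S.q_zero]
    smul_add := fun c x y => by
      change S.smul c (S.add x y) = S.add (S.smul c x) (S.smul c y)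
      rw [← S.q_s x, ← S.q_s y]
      simp only [smul_q, add_q, smul_add]
    add_smul := fun c d x => by
      change S.smul (c + d) x = S.add (S.smul c x) (S.smul d x)
      rw [← S.q_s x]
      simp only [smul_q, add_q, add_smul]
    zero_smul := fun x => by
      change S.smul 0 x = pt
      simp [smul, S.q_zero]
    norm_smul_le := fun c x => by
      change dist (S.smul c x) pt ≤ ‖c‖ * dist x pt
      calc dist (S.smul c x) pt = dist (S.q (c • S.s x)) (S.q (c • S.s pt)) := by
            rw [S.s_pt, smul_zero, S.q_zero, smul]
        _ ≤ dist (c • S.s x) (c • S.s pt) := S.dist_q_le _ _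
        _ = ‖c‖ * dist (S.s x) (S.s pt) := dist_smul₀ c _ _
        _ ≤ ‖c‖ * dist x pt := by gcongr; exact S.dist_s_le x pt }

end SplitQuotient

/-- A complete split quotient of a Banach space, as an object of `Ban`. -/
def SplitQuotient.ban {B : Ban} {Q : PCMet} (S : SplitQuotient B.carrier Q.carrier Q.pt) : Ban :=
  letI := S.normedAddCommGroup
  letI := S.normedSpace
  { carrier := Q.carrier }

/-- The quotient map onto a split quotient, as a morphism of `Ban`. -/
def SplitQuotient.proj {B : Ban} {Q : PCMet} (S : SplitQuotient B.carrier Q.carrier Q.pt) :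
    B ⟶ S.ban :=
  letI := S.normedAddCommGroup
  letI := S.normedSpace
  have h : ∀ b, dist (S.q b) Q.pt ≤ 1 * ‖b‖ := fun b => by
    have h₀ := S.dist_q_le b 0
    rwa [S.q_zero, dist_zero_right, ← one_mul ‖b‖] at h₀
  let T : B.carrier →ₗ[ℂ] Q.carrier :=
    { toFun := S.q
      map_add' := S.q_add
      map_smul' := S.q_smul }
  ⟨LinearMap.mkContinuous T 1 h, LinearMap.mkContinuous_norm_le T zero_le_one h⟩

/-! ### Beck's criterion -/

section Beck

variable {A B : Ban} {f g : A ⟶ B} {Q : PCMet} {p : Vp.obj B ⟶ Q}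

/-- A splitting in `CMet•` of a pair of morphisms of `Ban` makes the quotient a split quotient. -/
def splitQuotient (H : IsSplitCoequalizer (Vp.map f) (Vp.map g) p) :
    SplitQuotient B.carrier Q.carrier Q.pt :=
  have hq : ∀ a : A.carrier, p.1 (f.1 a) = p.1 (g.1 a) :=
    fun a => congrFun (congrArg Subtype.val H.condition) a
  have hg : ∀ b : B.carrier, g.1 (H.leftSection.1 b) = b :=
    fun b => congrFun (congrArg Subtype.val H.leftSection_bottom) b
  have hf : ∀ b : B.carrier, f.1 (H.leftSection.1 b) = H.rightSection.1 (p.1 b) :=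
    fun b => congrFun (congrArg Subtype.val H.leftSection_top) b
  { q := p.1
    s := H.rightSection.1
    q_lip := p.2.1
    s_lip := H.rightSection.2.1
    q_zero := p.2.2
    s_pt := H.rightSection.2.2
    q_s := fun x => congrFun (congrArg Subtype.val H.rightSection_π) x
    q_add := fun a b => by
      let t : B.carrier → A.carrier := H.leftSection.1
      have h := hq (t a + t b)
      rw [map_add, map_add, hg, hg, hf, hf] at h
      exact h.symm
    q_smul := fun c a => by
      let t : B.carrier → A.carrier := H.leftSection.1
      have h := hq (c • t a)
      rw [map_smul, map_smul, hg, hf] at h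
      exact h.symm }

theorem proj_condition (H : IsSplitCoequalizer (Vp.map f) (Vp.map g) p) :
    f ≫ (splitQuotient H).proj = g ≫ (splitQuotient H).proj :=
  Subtype.ext (ContinuousLinearMap.ext fun a =>
    congrFun (congrArg Subtype.val H.condition) a)

/-- The factorization through the split quotient of a morphism coequalizing `f` and `g`: its
restriction along the section. -/
def splitDesc (H : IsSplitCoequalizer (Vp.map f) (Vp.map g) p) {C : Ban} (h : B ⟶ C)
    (w : f ≫ h = g ≫ h) :
    { l : (splitQuotient H).ban ⟶ C // (splitQuotient H).proj ≫ l = h } :=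
  let S := splitQuotient H
  letI := S.normedAddCommGroup
  letI := S.normedSpace
  have hs : ∀ b, h.1 (S.s (S.q b)) = h.1 b := fun b => by
    have h₁ : f.1 (H.leftSection.1 b) = S.s (S.q b) :=
      congrFun (congrArg Subtype.val H.leftSection_top) b
    have h₂ : g.1 (H.leftSection.1 b) = b :=
      congrFun (congrArg Subtype.val H.leftSection_bottom) b
    have h₃ : h.1 (f.1 (H.leftSection.1 b)) = h.1 (g.1 (H.leftSection.1 b)) :=
      DFunLike.congr_fun (congrArg Subtype.val w) _
    rwa [h₁, h₂] at h₃
  let T : Q.carrier →ₗ[ℂ] C.carrier :=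
    { toFun := fun x => h.1 (S.s x)
      map_add' := fun x y => (hs _).trans (map_add h.1 _ _)
      map_smul' := fun c x => (hs _).trans (map_smul h.1 _ _) }
  have hT : ∀ x, ‖T x‖ ≤ 1 * dist x Q.pt := fun x => by
    rw [one_mul]
    calc ‖h.1 (S.s x)‖ ≤ ‖S.s x‖ := by simpa using h.1.le_of_opNorm_le h.2 (S.s x)
      _ = dist (S.s x) (S.s Q.pt) := by rw [S.s_pt, dist_zero_right]
      _ ≤ dist x Q.pt := S.dist_s_le _ _
  ⟨⟨LinearMap.mkContinuous T 1 hT, LinearMap.mkContinuous_norm_le T zero_le_one hT⟩,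
    Subtype.ext (ContinuousLinearMap.ext hs)⟩

/-- The split quotient is the coequalizer in `Ban`. -/
def projIsColimit (H : IsSplitCoequalizer (Vp.map f) (Vp.map g) p) :
    IsColimit (Cofork.ofπ (splitQuotient H).proj (proj_condition H)) :=
  Cofork.IsColimit.mk' _ fun c =>
    ⟨(splitDesc H c.π c.condition).1, (splitDesc H c.π c.condition).2, fun {m} hm => by
      have e : (splitQuotient H).proj ≫ m =
          (splitQuotient H).proj ≫ (splitDesc H c.π c.condition).1 :=
        hm.trans (splitDesc H c.π c.condition).2.symm
      refine Subtype.ext (ContinuousLinearMap.ext fun x => ?_)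
      have hx := DFunLike.congr_fun (congrArg Subtype.val e) ((splitQuotient H).s x)
      have hq : (splitQuotient H).proj.1 ((splitQuotient H).s x) = x := (splitQuotient H).q_s x
      change m.1 ((splitQuotient H).proj.1 ((splitQuotient H).s x)) =
        (splitDesc H c.π c.condition).1.1
          ((splitQuotient H).proj.1 ((splitQuotient H).s x)) at hx
      rwa [hq] at hx⟩

/-- The underlying pointed metric space of the split quotient is `Q` itself, on the nose, so that
the image under `Vp` of the coequalizer is the given split coequalizer. -/
def mapProjIsColimit (H : IsSplitCoequalizer (Vp.map f) (Vp.map g) p) :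
    IsColimit (Vp.mapCocone (Cofork.ofπ (splitQuotient H).proj (proj_condition H))) :=
  (isColimitMapCoconeCoforkEquiv Vp (proj_condition H)).symm H.isCoequalizer

end Beck

instance : HasCoequalizerOfIsSplitPair Vp :=
  ⟨fun f g _ => HasColimit.mk
    ⟨_, projIsColimit (HasSplitCoequalizer.isSplitCoequalizer (Vp.map f) (Vp.map g))⟩⟩

instance : PreservesColimitOfIsSplitPair Vp :=
  ⟨fun f g _ =>
    let H := HasSplitCoequalizer.isSplitCoequalizer (Vp.map f) (Vp.map g)
    preservesColimit_of_preserves_colimit_cocone (projIsColimit H) (mapProjIsColimit H)⟩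

/-- A linear contraction with a nonexpanding inverse is an isomorphism, since the inverse is
automatically linear. -/
instance : Vp.ReflectsIsomorphisms where
  reflects {A B} f _ := by
    let k := inv (Vp.map f)
    have hfk : ∀ b : B.carrier, f.1 (k.1 b) = b := fun b =>
      congrFun (congrArg Subtype.val (IsIso.inv_hom_id (Vp.map f))) b
    have hkf : ∀ a : A.carrier, k.1 (f.1 a) = a := fun a =>
      congrFun (congrArg Subtype.val (IsIso.hom_inv_id (Vp.map f))) a
    let T : B.carrier →ₗ[ℂ] A.carrier :=
      (LinearEquiv.ofBijective f.1.toLinearMap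
        ⟨Function.LeftInverse.injective hkf, Function.RightInverse.surjective hfk⟩).symm
    have hTk : ∀ b, T b = k.1 b := fun b =>
      (LinearEquiv.symm_apply_eq _).2 (hfk b).symm
    have hT : ∀ b, ‖T b‖ ≤ 1 * ‖b‖ := fun b => by
      have h : dist (k.1 b) (k.1 (0 : B.carrier)) ≤ (1 : NNReal) * dist b (0 : B.carrier) :=
        k.2.1.dist_le_mul _ _
      rw [show k.1 (0 : B.carrier) = (0 : A.carrier) from k.2.2] at h
      rw [hTk, ← dist_zero_right b]
      exact (@dist_zero_right A.carrier _ (k.1 b)).symm.trans_le h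
    refine ⟨⟨LinearMap.mkContinuous T 1 hT, LinearMap.mkContinuous_norm_le T zero_le_one hT⟩,
      Subtype.ext (ContinuousLinearMap.ext fun a => ?_),
      Subtype.ext (ContinuousLinearMap.ext fun b => ?_)⟩
    · exact (hTk _).trans (hkf a)
    · exact (congrArg f.1 (hTk b)).trans (hfk b)

/-- The forgetful functor `V• : Ban ⥤ CMet•` is monadic. -/
theorem Vp_monadic : Nonempty (MonadicRightAdjoint Vp) := by
  exact ⟨monadicOfHasPreservesGSplitCoequalizersOfReflectsIsomorphisms freeAdj⟩
end

section
/- The forgetful functor V• : Ban → CMet•, sending a complex Banach space to its underlying complete metric space pointed at 0, has a left adjoint (whose value at a pointed complete metric space is its Lipschitz-free, or Arens–Eells, space). -/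
/-!
By the initial-object criterion, it suffices to find, for every pointed complete metric space `X`,
a Banach space `F(X)` and a pointed nonexpanding map `X → F(X)` through which every pointed
nonexpanding map from `X` to a Banach space factors by a unique linear contraction.

Let `I` be the set of pointed nonexpanding functions `g : X → ℂ`. Evaluation `δ x = (g x)_g` is a
pointed nonexpanding map `X → ℓ^∞(I)`, and `F(X)` is the closed linear span of its image. Uniqueness
of factorizations is clear, since finite combinations `∑ cᵢ δ(xᵢ)` are dense. For existence, let
`f : X → E` be pointed and nonexpanding. If `φ` is a functional on `E` with `‖φ‖ ≤ 1` then
`φ ∘ f ∈ I`, so `|φ (∑ cᵢ f(xᵢ))| ≤ ‖∑ cᵢ δ(xᵢ)‖`; by Hahn–Banach, `‖∑ cᵢ f(xᵢ)‖ ≤ ‖∑ cᵢ δ(xᵢ)‖`,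
so `∑ cᵢ δ(xᵢ) ↦ ∑ cᵢ f(xᵢ)` is well defined and extends to a contraction `F(X) → E`.
-/

open CategoryTheory

open scoped ENNReal

namespace ArensEells

variable (X : PCMet)

/-- The pointed nonexpanding complex-valued functions on `X`, i.e. the unit ball of the space of
Lipschitz functions vanishing at the base point. -/
def Dual : Type := { g : X.carrier → ℂ // LipschitzWith 1 g ∧ g X.pt = 0 }

variable {X} in
lemma Dual.norm_apply_le (g : Dual X) (x : X.carrier) : ‖g.1 x‖ ≤ dist x X.pt := by
  have h := g.2.1.dist_le_mul x X.pt
  simpa [g.2.2, dist_zero_right] using h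

/-- The evaluation map `x ↦ (g x)_g` from `X` to the bounded functions on `Dual X`. -/
noncomputable def eval (x : X.carrier) : lp (fun _ : Dual X => ℂ) ∞ :=
  ⟨fun g => g.1 x, memℓp_infty ⟨dist x X.pt, by
    rintro _ ⟨g, rfl⟩
    exact g.norm_apply_le x⟩⟩

lemma eval_apply (x : X.carrier) (g : Dual X) : eval X x g = g.1 x := rfl

lemma eval_pt : eval X X.pt = 0 := lp.ext (funext fun g => g.2.2)

lemma lipschitz_eval : LipschitzWith 1 (eval X) := by
  refine LipschitzWith.of_dist_le_mul fun x y => ?_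
  rw [NNReal.coe_one, one_mul, dist_eq_norm]
  refine lp.norm_le_of_forall_le dist_nonneg fun g => ?_
  have h := g.2.1.dist_le_mul x y
  rwa [NNReal.coe_one, one_mul, dist_eq_norm] at h

/-- The linear extension of `eval` to finite formal combinations `∑ cᵢ xᵢ`. -/
noncomputable def evalLin : (X.carrier →₀ ℂ) →ₗ[ℂ] lp (fun _ : Dual X => ℂ) ∞ :=
  Finsupp.linearCombination ℂ (eval X)

/-- The underlying space of the Arens–Eells space: the closed linear span of the evaluations. -/
noncomputable def freeSubmodule : Submodule ℂ (lp (fun _ : Dual X => ℂ) ∞) :=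
  (LinearMap.range (evalLin X)).topologicalClosure

/-- The Arens–Eells (Lipschitz-free) Banach space of `X`. -/
noncomputable def free : Ban :=
  haveI : CompleteSpace (freeSubmodule X) :=
    (Submodule.isClosed_topologicalClosure _).completeSpace_coe
  { carrier := freeSubmodule X }

/-- The class in `free X` of a finite formal combination of points of `X`. -/
noncomputable def toFree : (X.carrier →₀ ℂ) →ₗ[ℂ] (free X).carrier :=
  (evalLin X).codRestrict (freeSubmodule X) fun m =>
    Submodule.le_topologicalClosure _ (LinearMap.mem_range_self _ m)

lemma norm_toFree (m : X.carrier →₀ ℂ) : ‖toFree X m‖ = ‖evalLin X m‖ := rfl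

lemma denseRange_toFree : DenseRange (toFree X) := by
  refine Subtype.dense_iff.2 fun y hy => ?_
  have h : Subtype.val '' Set.range (toFree X) = (LinearMap.range (evalLin X) : Set _) :=
    (Set.range_comp (Subtype.val : freeSubmodule X → _) (toFree X)).symm
  exact h ▸ hy

/-- The universal pointed nonexpanding map from `X` to its Arens–Eells space. -/
noncomputable def unit : X ⟶ Vp.obj (free X) :=
  ⟨fun x => toFree X (Finsupp.single x 1), by
    have h (x : X.carrier) : (toFree X (Finsupp.single x 1)).1 = eval X x := by
      change Finsupp.linearCombination ℂ (eval X) (Finsupp.single x 1) = _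
      simp
    refine ⟨LipschitzWith.of_dist_le_mul fun x y => ?_, Subtype.ext ((h _).trans (eval_pt X))⟩
    change dist (toFree X (Finsupp.single x 1)).1 (toFree X (Finsupp.single y 1)).1 ≤ _
    rw [h, h]
    exact (lipschitz_eval X).dist_le_mul x y⟩

variable {X} {E : Ban}

/-- The linear extension of a pointed nonexpanding map `f : X ⟶ E` to finite formal combinations
`∑ cᵢ xᵢ`. -/
noncomputable def extendLin (f : X ⟶ Vp.obj E) : (X.carrier →₀ ℂ) →ₗ[ℂ] E.carrier :=
  Finsupp.linearCombination ℂ (M := E.carrier) f.1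

lemma extendLin_single (f : X ⟶ Vp.obj E) (x : X.carrier) (c : ℂ) :
    extendLin f (Finsupp.single x c) = c • (show E.carrier from f.1 x) :=
  Finsupp.linearCombination_single (M := E.carrier) ℂ c x

/-- The Hahn–Banach estimate: `‖∑ cᵢ f(xᵢ)‖ ≤ ‖∑ cᵢ δ(xᵢ)‖`, obtained by testing against
`φ ∘ f ∈ Dual X` for a norming functional `φ`. -/
lemma norm_extendLin_le (f : X ⟶ Vp.obj E) (m : X.carrier →₀ ℂ) :
    ‖extendLin f m‖ ≤ ‖evalLin X m‖ := by
  obtain ⟨φ, hφ, hφm⟩ := exists_dual_vector'' ℂ (extendLin f m)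
  have hφ1 : LipschitzWith 1 φ := φ.lipschitz.weaken (by exact_mod_cast hφ)
  let g : Dual X := ⟨fun x => φ (f.1 x), by simpa using! hφ1.comp f.2.1,
    (congrArg φ f.2.2).trans (map_zero φ)⟩
  have hg (n : X.carrier →₀ ℂ) : evalLin X n g = φ (extendLin f n) := by
    induction n using Finsupp.induction_linear with
    | zero => simp
    | add n n' hn hn' => rw [map_add, map_add, map_add, lp.coeFn_add, Pi.add_apply, hn, hn']
    | single x c =>
      rw [extendLin_single, map_smul, evalLin, Finsupp.linearCombination_single, lp.coeFn_smul,
        Pi.smul_apply, eval_apply]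
  have h := lp.norm_apply_le_norm ENNReal.top_ne_zero (evalLin X m) g
  rw [hg, hφm] at h
  simpa using h

/-- The contraction `free X ⟶ E` extending a pointed nonexpanding map `X ⟶ E`. -/
noncomputable def lift (f : X ⟶ Vp.obj E) : free X ⟶ E :=
  ⟨(extendLin f).extendOfNorm (toFree X),
    LinearMap.opNorm_extendOfNorm_le (denseRange_toFree X) zero_le_one fun m => by
      rw [one_mul, norm_toFree]
      exact norm_extendLin_le f m⟩

lemma unit_lift (f : X ⟶ Vp.obj E) : unit X ≫ Vp.map (lift f) = f := by
  refine Subtype.ext (funext fun x => ?_)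
  change (extendLin f).extendOfNorm (toFree X) (toFree X (Finsupp.single x 1)) = f.1 x
  rw [LinearMap.extendOfNorm_eq (denseRange_toFree X)
    ⟨1, fun m => by rw [one_mul, norm_toFree]; exact norm_extendLin_le f m⟩,
    extendLin_single, one_smul]

lemma hom_ext {u v : free X ⟶ E} (h : unit X ≫ Vp.map u = unit X ≫ Vp.map v) : u = v := by
  have hlin : u.1.toLinearMap ∘ₗ toFree X = v.1.toLinearMap ∘ₗ toFree X := by
    refine Finsupp.lhom_ext' fun x => LinearMap.ext_ring ?_
    exact congrFun (congrArg Subtype.val h) x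
  refine Subtype.ext (ContinuousLinearMap.coeFn_injective ?_)
  exact (denseRange_toFree X).equalizer u.1.continuous v.1.continuous
    (congrArg DFunLike.coe hlin)

end ArensEells

/-- The forgetful functor `V• : Ban ⥤ CMet•` has a left adjoint (given by Lipschitz-free,
or Arens–Eells, spaces). -/
theorem Vp_isRightAdjoint : Vp.IsRightAdjoint := by
  refine isRightAdjoint_iff_hasInitial_structuredArrow.2 fun X => ?_
  refine (Limits.IsInitial.ofUniqueHom (X := StructuredArrow.mk (ArensEells.unit X))
    (fun B => StructuredArrow.homMk (ArensEells.lift B.hom) (ArensEells.unit_lift B.hom))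
    fun B m => StructuredArrow.ext _ _ (ArensEells.hom_ext ?_)).hasInitial
  exact (StructuredArrow.w m).trans (ArensEells.unit_lift B.hom).symm
end

section
/- The category CMet• of pointed complete metric spaces and basepoint-preserving nonexpanding maps is locally ℵ₁-presentable. -/
/-!
The category is cocomplete, its separable objects are `ℵ₁`-presentable and essentially form a
set, and every object is the `ℵ₁`-directed union of its closed separable subspaces.

*Colimits.* On the disjoint union of the values of a diagram `F`, take the supremum of the
pseudometrics `|φ p - φ q|`, where `φ` runs over the cocones from `F` to the pointed line `ℝ`.
It is finite because all the `φ` vanish at the basepoint. A cocone to `Y` is nonexpanding for this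
pseudometric, as seen by composing it with the functions `dist · a` on `Y`. The (separated)
completion is therefore the colimit.

*Separable spaces are presentable.* Let `c` be the colimit of a diagram over an `ℵ₁`-directed
poset. For `y` in one stage, the infimum over later stages of the distance to `y` is a cocone to
`ℝ`; hence distances in the colimit are at least this infimum, and it is attained because `ℝ` is
first countable and the poset is `ℵ₁`-directed (`exists_dist_tr_eq`). Consequently a sequence in
the union of the images of the legs, together with its closure, lifts isometrically to one stage
(`exists_lift`), so this union is closed. As `c` factors through it, it is everything
(`exists_leg_eq`). Both conditions for `Hom(A, -)` to preserve the colimit now follow by applying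
these facts to a dense sequence of `A`.

*Generation.* Countable unions of separable sets have separable closure, and any two points lie
in a common closed separable subset, which gives the universal property of the union
(`sepIsColimit`). By the Kuratowski embedding, every separable object is isomorphic to a closed
separable subset of `ℓ^∞`, so these provide a set of representatives.
-/

open CategoryTheory

open Limits

namespace PCMet

/-! ### Elementary facts on morphisms and cocones -/

lemma hom_dist_le {X Y : PCMet} (f : X ⟶ Y) (x y : X.carrier) :
    dist (f.1 x) (f.1 y) ≤ dist x y := by
  simpa using f.2.1.dist_le_mul x y

lemma hom_pt {X Y : PCMet} (f : X ⟶ Y) : f.1 X.pt = Y.pt := f.2.2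

lemma hom_ext {X Y : PCMet} {f g : X ⟶ Y} (h : ∀ x, f.1 x = g.1 x) : f = g :=
  Subtype.ext (funext h)

lemma comp_apply {X Y Z : PCMet} (f : X ⟶ Y) (g : Y ⟶ Z) (x : X.carrier) :
    (f ≫ g).1 x = g.1 (f.1 x) := rfl

/-- A morphism from a map that does not increase distances and preserves the basepoint. -/
def mkHom {X Y : PCMet} (f : X.carrier → Y.carrier)
    (h : ∀ x y, dist (f x) (f y) ≤ dist x y) (hp : f X.pt = Y.pt) : X ⟶ Y :=
  ⟨f, LipschitzWith.of_dist_le_mul (by simpa using h), hp⟩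

lemma mkHom_apply {X Y : PCMet} (f : X.carrier → Y.carrier)
    (h : ∀ x y, dist (f x) (f y) ≤ dist x y) (hp : f X.pt = Y.pt) (x : X.carrier) :
    (mkHom f h hp).1 x = f x := rfl

/-- The isomorphism given by a pointed bijective isometry. -/
noncomputable def isoOfIsometryEquiv {X Y : PCMet} (e : X.carrier ≃ᵢ Y.carrier)
    (hp : e X.pt = Y.pt) : X ≅ Y where
  hom := mkHom e (fun x y => (e.dist_eq x y).le) hp
  inv := mkHom e.symm (fun x y => (e.symm.dist_eq x y).le) (by rw [← hp]; simp)
  hom_inv_id := hom_ext fun x => e.symm_apply_apply x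
  inv_hom_id := hom_ext fun x => e.apply_symm_apply x

section Cocone

variable {J : Type} [Category.{0} J] {F : J ⥤ PCMet} (c : Cocone F)

/-- The underlying map of a leg of a cocone. -/
def leg (j : J) (x : (F.obj j).carrier) : c.pt.carrier := (c.ι.app j).1 x

lemma leg_dist_le (j : J) (x y : (F.obj j).carrier) :
    dist (leg c j x) (leg c j y) ≤ dist x y := hom_dist_le (c.ι.app j) x y

lemma leg_pt (j : J) : leg c j (F.obj j).pt = c.pt.pt := hom_pt (c.ι.app j)

lemma leg_map {j k : J} (f : j ⟶ k) (x : (F.obj j).carrier) :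
    leg c k ((F.map f).1 x) = leg c j x :=
  congrFun (congrArg Subtype.val (c.w f)) x

lemma map_comp_apply {i j k : J} (f : i ⟶ j) (g : j ⟶ k) (x : (F.obj i).carrier) :
    (F.map (f ≫ g)).1 x = (F.map g).1 ((F.map f).1 x) := by
  rw [F.map_comp]; rfl

/-- A cocone from pointwise data. -/
def mkCocone (Y : PCMet) (φ : ∀ j, (F.obj j).carrier → Y.carrier)
    (h : ∀ j x y, dist (φ j x) (φ j y) ≤ dist x y) (hp : ∀ j, φ j (F.obj j).pt = Y.pt)
    (hc : ∀ {j k} (f : j ⟶ k) x, φ k ((F.map f).1 x) = φ j x) : Cocone F where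
  pt := Y
  ι :=
    { app := fun j => mkHom (φ j) (h j) (hp j)
      naturality := fun _ _ f => hom_ext fun x => hc f x }

lemma desc_leg {c : Cocone F} (hc : IsColimit c) (s : Cocone F) (j : J)
    (x : (F.obj j).carrier) : (hc.desc s).1 (leg c j x) = leg s j x :=
  congrFun (congrArg Subtype.val (hc.fac s j)) x

end Cocone

/-! ### Cocompleteness -/

section Colimits

variable {J : Type} [Category.{0} J] (F : J ⥤ PCMet)

/-- The disjoint union of the underlying sets of a diagram, with an extra basepoint `none`
(needed when the index category is empty). -/
def Pre : Type := Option (Σ j : J, (F.obj j).carrier)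

/-- The distance of a point of `Pre F` from the basepoint, measured in its own summand. -/
def Pre.size : Pre F → ℝ
  | none => 0
  | some ⟨j, x⟩ => dist x (F.obj j).pt

/-- A cocone on `F` with vertex the real line pointed at `0`, as a function on `Pre F`. -/
structure RealCocone where
  /-- The underlying function. -/
  toFun : Pre F → ℝ
  none' : toFun none = 0
  pt' : ∀ j, toFun (some ⟨j, (F.obj j).pt⟩) = 0
  lip' : ∀ j x y, |toFun (some ⟨j, x⟩) - toFun (some ⟨j, y⟩)| ≤ dist x y
  map' : ∀ {j k} (f : j ⟶ k) x, toFun (some ⟨k, (F.map f).1 x⟩) = toFun (some ⟨j, x⟩)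

instance : Nonempty (RealCocone F) := ⟨⟨fun _ => 0, rfl, by simp, by simp, by simp⟩⟩

variable {F}

lemma RealCocone.abs_le (φ : RealCocone F) (p : Pre F) : |φ.toFun p| ≤ Pre.size F p := by
  rcases p with _ | ⟨j, x⟩
  · change |φ.toFun none| ≤ 0
    simp [φ.none']
  · have := φ.lip' j x (F.obj j).pt
    rwa [φ.pt', sub_zero] at this

lemma RealCocone.bdd (p q : Pre F) :
    BddAbove (Set.range fun φ : RealCocone F => |φ.toFun p - φ.toFun q|) := by
  refine ⟨Pre.size F p + Pre.size F q, ?_⟩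
  rintro _ ⟨φ, rfl⟩
  exact (abs_sub _ _).trans (add_le_add (φ.abs_le p) (φ.abs_le q))

/-- The largest pseudometric on `Pre F` making all real cocones nonexpanding. -/
noncomputable instance : PseudoMetricSpace (Pre F) where
  dist p q := ⨆ φ : RealCocone F, |φ.toFun p - φ.toFun q|
  dist_self p := by simp
  dist_comm p q := by simp only [abs_sub_comm]
  dist_triangle p q r := ciSup_le fun φ =>
    (abs_sub_le _ (φ.toFun q) _).trans
      (add_le_add (le_ciSup (RealCocone.bdd p q) φ) (le_ciSup (RealCocone.bdd q r) φ))

lemma Pre.dist_def (p q : Pre F) :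
    dist p q = ⨆ φ : RealCocone F, |φ.toFun p - φ.toFun q| := rfl

lemma RealCocone.le_dist (φ : RealCocone F) (p q : Pre F) :
    |φ.toFun p - φ.toFun q| ≤ dist p q := le_ciSup (RealCocone.bdd p q) φ

/-- The canonical map of `Pre F` to its completion. -/
noncomputable def Pre.toCompl (p : Pre F) : UniformSpace.Completion (Pre F) := p

lemma Pre.toCompl_eq {p q : Pre F} (h : ∀ φ : RealCocone F, φ.toFun p = φ.toFun q) :
    p.toCompl = q.toCompl := by
  rw [toCompl, toCompl, ← dist_eq_zero, UniformSpace.Completion.dist_eq, Pre.dist_def]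
  simp [h]

variable (F)

/-- The vertex of the colimit of `F`: the completion (which is separated) of `Pre F`. -/
noncomputable def colim : PCMet where
  carrier := UniformSpace.Completion (Pre F)
  pt := Pre.toCompl none

/-- The colimit cocone of `F`. -/
noncomputable def colimCocone : Cocone F :=
  mkCocone (colim F) (fun j x => Pre.toCompl (some ⟨j, x⟩))
    (fun j x y => (UniformSpace.Completion.dist_eq (α := Pre F) _ _).trans_le
      (ciSup_le fun φ => φ.lip' j x y))
    (fun j => Pre.toCompl_eq fun φ => (φ.pt' j).trans φ.none'.symm)
    (fun f x => Pre.toCompl_eq fun φ => φ.map' f x)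

variable {F}

/-- The map on `Pre F` induced by a cocone. -/
def Pre.desc (s : Cocone F) : Pre F → s.pt.carrier
  | none => s.pt.pt
  | some ⟨j, x⟩ => leg s j x

/-- A cocone `s` followed by the distance to the point `a`, normalised to vanish at the
basepoint, is a real cocone. -/
noncomputable def RealCocone.ofCocone (s : Cocone F) (a : s.pt.carrier) : RealCocone F where
  toFun p := dist (Pre.desc s p) a - dist s.pt.pt a
  none' := sub_self _
  pt' j := by
    change dist (leg s j _) a - _ = 0
    rw [leg_pt, sub_self]
  lip' j x y := by
    rw [sub_sub_sub_cancel_right]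
    exact (abs_dist_sub_le _ _ _).trans (leg_dist_le s j x y)
  map' f x := by
    change dist (leg s _ _) a - _ = dist (leg s _ _) a - _
    rw [leg_map]

/-- The pseudometric on `Pre F` dominates the one pulled back along any cocone `s`: the distance
of the images of `p` and `q` is the variation between `p` and `q` of the real cocone given by
the distance to the image of `q`. -/
lemma Pre.desc_lipschitz (s : Cocone F) : LipschitzWith 1 (Pre.desc s) := by
  refine LipschitzWith.of_dist_le_mul fun p q => ?_
  have := (RealCocone.ofCocone s (Pre.desc s q)).le_dist p q
  simp only [RealCocone.ofCocone, dist_self, sub_sub_sub_cancel_right, sub_zero, abs_dist] at this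
  simpa using this

/-- The universal property of `colimCocone`. -/
noncomputable def colimIsColimit : IsColimit (colimCocone F) where
  desc s := ⟨UniformSpace.Completion.extension (Pre.desc s),
    (Pre.desc_lipschitz s).completion_extension,
    UniformSpace.Completion.extension_coe (Pre.desc_lipschitz s).uniformContinuous _⟩
  fac s j := hom_ext fun x =>
    UniformSpace.Completion.extension_coe (Pre.desc_lipschitz s).uniformContinuous
      (id (α := Pre F) (some ⟨j, x⟩))
  uniq s m hm := by
    refine Subtype.ext (UniformSpace.Completion.extension_unique
      (Pre.desc_lipschitz s).uniformContinuous m.2.1.uniformContinuous ?_).symm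
    rintro (_ | ⟨j, x⟩)
    · exact (hom_pt m).symm
    · exact (congrFun (congrArg Subtype.val (hm j)) x).symm

end Colimits

instance : HasColimits PCMet where
  has_colimits_of_shape _ _ := ⟨fun F => ⟨⟨⟨colimCocone F, colimIsColimit⟩⟩⟩⟩

/-! ### Colimits over `ℵ₁`-directed posets -/

section Directed

variable {J : Type} [PartialOrder J]

lemma exists_ub (hJ : IsAleph1Directed J) {ι : Type*} [Countable ι] (l : ι → J) :
    ∃ k, ∀ i, l i ≤ k := by
  obtain ⟨k, hk⟩ := hJ (Set.range l)
    (by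
      rw [Cardinal.lt_aleph_one_iff, Cardinal.le_aleph0_iff_set_countable]
      exact Set.countable_range l)
  exact ⟨k, fun i => hk _ ⟨i, rfl⟩⟩

lemma exists_ub₂ (hJ : IsAleph1Directed J) (j k : J) : ∃ l, j ≤ l ∧ k ≤ l := by
  obtain ⟨l, hl⟩ := exists_ub hJ (fun b : Bool => if b then j else k)
  exact ⟨l, by simpa using hl true, by simpa using hl false⟩

variable {F : J ⥤ PCMet}

/-- The transition map of a diagram on a poset. -/
def tr (F : J ⥤ PCMet) {j k : J} (h : j ≤ k) (x : (F.obj j).carrier) : (F.obj k).carrier :=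
  (F.map (homOfLE h)).1 x

lemma tr_tr {i j k : J} (h : i ≤ j) (h' : j ≤ k) (x : (F.obj i).carrier) :
    tr F h' (tr F h x) = tr F (h.trans h') x :=
  (map_comp_apply (homOfLE h) (homOfLE h') x).symm

lemma tr_dist_le {j k : J} (h : j ≤ k) (x y : (F.obj j).carrier) :
    dist (tr F h x) (tr F h y) ≤ dist x y := hom_dist_le (F.map (homOfLE h)) x y

lemma tr_pt {j k : J} (h : j ≤ k) : tr F h (F.obj j).pt = (F.obj k).pt :=
  hom_pt (F.map (homOfLE h))

lemma leg_tr (c : Cocone F) {j k : J} (h : j ≤ k) (x : (F.obj j).carrier) :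
    leg c k (tr F h x) = leg c j x := leg_map c (homOfLE h) x

/-- For `y` in stage `j` and `z` in stage `k`, the infimum of the distances between their images
in the common later stages. -/
noncomputable def gap (F : J ⥤ PCMet) {j : J} (y : (F.obj j).carrier) (k : J)
    (z : (F.obj k).carrier) : ℝ :=
  ⨅ l : {l : J // k ≤ l ∧ j ≤ l}, dist (tr F l.2.1 z) (tr F l.2.2 y)

lemma gap_le {j : J} (y : (F.obj j).carrier) {k : J} (z : (F.obj k).carrier) {l : J}
    (h : k ≤ l) (h' : j ≤ l) : gap F y k z ≤ dist (tr F h z) (tr F h' y) :=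
  ciInf_le (f := fun l : {l : J // k ≤ l ∧ j ≤ l} => dist (tr F l.2.1 z) (tr F l.2.2 y))
    ⟨0, by rintro _ ⟨_, rfl⟩; exact dist_nonneg⟩ ⟨l, h, h'⟩

lemma le_gap (hJ : IsAleph1Directed J) {j : J} (y : (F.obj j).carrier) {k : J}
    (z : (F.obj k).carrier) {r : ℝ}
    (hr : ∀ l (h : k ≤ l) (h' : j ≤ l), r ≤ dist (tr F h z) (tr F h' y)) : r ≤ gap F y k z := by
  obtain ⟨l, h, h'⟩ := exists_ub₂ hJ k j
  have : Nonempty {l : J // k ≤ l ∧ j ≤ l} := ⟨⟨l, h, h'⟩⟩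
  exact le_ciInf fun l => hr l.1 l.2.1 l.2.2

/-- `gap F y k` is nonexpanding. -/
lemma gap_le_add (hJ : IsAleph1Directed J) {j : J} (y : (F.obj j).carrier) {k : J}
    (z w : (F.obj k).carrier) : gap F y k z ≤ gap F y k w + dist z w := by
  rw [← sub_le_iff_le_add]
  refine le_gap hJ y w fun l h h' => ?_
  have h1 := gap_le y z h h'
  have h2 := dist_triangle (tr F h z) (tr F h w) (tr F h' y)
  have h3 := tr_dist_le h z w
  linarith

lemma gap_tr (hJ : IsAleph1Directed J) {j : J} (y : (F.obj j).carrier) {k k' : J} (hk : k ≤ k')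
    (z : (F.obj k).carrier) : gap F y k' (tr F hk z) = gap F y k z := by
  apply le_antisymm
  · refine le_gap hJ y z fun l h h' => ?_
    obtain ⟨m, hm, hm'⟩ := exists_ub₂ hJ l k'
    have h1 := gap_le y (tr F hk z) hm' (h'.trans hm)
    rw [tr_tr] at h1
    refine h1.trans ?_
    have h2 := tr_dist_le hm (tr F h z) (tr F h' y)
    rwa [tr_tr, tr_tr] at h2
  · refine le_gap hJ y _ fun l h h' => ?_
    have h1 := gap_le y z (hk.trans h) h'
    rwa [tr_tr]

/-- The functions `gap F y k` assemble to a cocone on `F` with vertex `ℝ`. -/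
noncomputable def gapCocone (hJ : IsAleph1Directed J) {j : J} (y : (F.obj j).carrier) :
    Cocone F :=
  mkCocone ⟨ℝ, gap F y j (F.obj j).pt⟩ (gap F y)
    (fun k z w => by
      change |gap F y k z - gap F y k w| ≤ _
      have h1 := gap_le_add hJ y z w
      have h2 := gap_le_add hJ y w z
      rw [dist_comm] at h2
      exact abs_sub_le_iff.2 ⟨by linarith, by linarith⟩)
    (fun k => by
      obtain ⟨l, h, h'⟩ := exists_ub₂ hJ k j
      change gap F y k _ = gap F y j _
      rw [← gap_tr hJ y h, ← gap_tr hJ y h', tr_pt, tr_pt])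
    (fun f x => gap_tr hJ y (leOfHom f) x)

/-- Distances in an `ℵ₁`-directed colimit are already attained at some stage. The colimit
property applied to `gapCocone` bounds the infimum of the distances from above, and the infimum
is attained since it is the limit of countably many stages. -/
lemma exists_dist_tr_eq (hJ : IsAleph1Directed J) {c : Cocone F} (hc : IsColimit c) {j : J}
    (x y : (F.obj j).carrier) :
    ∃ (k : J) (h : j ≤ k), dist (tr F h x) (tr F h y) = dist (leg c j x) (leg c j y) := by
  have hgap : gap F y j x ≤ dist (leg c j x) (leg c j y) := by
    have h0 := hom_dist_le (hc.desc (gapCocone hJ y)) (leg c j x) (leg c j y)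
    rw [desc_leg, desc_leg] at h0
    change |gap F y j x - gap F y j y| ≤ _ at h0
    have h1 : gap F y j y ≤ 0 := (gap_le y y le_rfl le_rfl).trans (dist_self _).le
    have h2 := (abs_le.1 h0).2
    linarith
  have hex : ∀ n : ℕ, ∃ l : {l : J // j ≤ l},
      dist (tr F l.2 x) (tr F l.2 y) < gap F y j x + 1 / ((n : ℝ) + 1) := by
    intro n
    by_contra! hcon
    have := le_gap hJ y x fun l h _ => hcon ⟨l, h⟩
    have hn : 0 < 1 / ((n : ℝ) + 1) := Nat.one_div_pos_of_nat
    linarith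
  choose l hl using hex
  obtain ⟨k, hk⟩ := exists_ub hJ fun n => (l n).1
  have hjk : j ≤ k := (l 0).2.trans (hk 0)
  refine ⟨k, hjk, le_antisymm (le_trans ?_ hgap) ?_⟩
  · refine le_of_forall_pos_le_add fun ε hε => ?_
    obtain ⟨n, hn⟩ := exists_nat_one_div_lt hε
    have h1 := tr_dist_le (hk n) (tr F (l n).2 x) (tr F (l n).2 y)
    rw [tr_tr, tr_tr] at h1
    linarith [hl n]
  · have := leg_dist_le c k (tr F hjk x) (tr F hjk y)
    rwa [leg_tr, leg_tr] at this

/-- If every term of the sequence `v` lies in the image of some leg, then the closure of its range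
lifts isometrically to a single stage `k`. Finding a stage where the countably many mutual
distances are attained lifts the sequence; the leg is isometric on the closure of the lifted
sequence, which is complete, so its image there is closed. -/
lemma exists_lift (hJ : IsAleph1Directed J) {c : Cocone F} (hc : IsColimit c)
    (v : ℕ → c.pt.carrier) (hv : ∀ n, ∃ j x, leg c j x = v n) :
    ∃ (k : J) (Z : Set (F.obj k).carrier),
      (∀ a ∈ Z, ∀ b ∈ Z, dist (leg c k a) (leg c k b) = dist a b) ∧
      ∀ w ∈ closure (Set.range v), ∃ a ∈ Z, leg c k a = w := by
  choose j x hx using hv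
  obtain ⟨k₀, hk₀⟩ := exists_ub hJ j
  have hex : ∀ p : ℕ × ℕ, ∃ l : {l : J // k₀ ≤ l},
      dist (tr F l.2 (tr F (hk₀ p.1) (x p.1))) (tr F l.2 (tr F (hk₀ p.2) (x p.2))) =
        dist (v p.1) (v p.2) := by
    intro p
    obtain ⟨l, h, hl⟩ := exists_dist_tr_eq hJ hc (tr F (hk₀ p.1) (x p.1)) (tr F (hk₀ p.2) (x p.2))
    rw [leg_tr, leg_tr, hx, hx] at hl
    exact ⟨⟨l, h⟩, hl⟩
  choose l hl using hex
  obtain ⟨k, hk⟩ := exists_ub hJ fun p => (l p).1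
  have hjk : ∀ n, j n ≤ k := fun n => (hk₀ n).trans ((l (n, n)).2.trans (hk (n, n)))
  let z : ℕ → (F.obj k).carrier := fun n => tr F (hjk n) (x n)
  have hz : ∀ n, leg c k (z n) = v n := fun n => (leg_tr c _ _).trans (hx n)
  have hdist : ∀ n m, dist (leg c k (z n)) (leg c k (z m)) = dist (z n) (z m) := by
    intro n m
    refine le_antisymm (leg_dist_le c k _ _) ?_
    have h1 := tr_dist_le (hk (n, m)) (tr F (l (n, m)).2 (tr F (hk₀ n) (x n)))
      (tr F (l (n, m)).2 (tr F (hk₀ m) (x m)))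
    rw [hl (n, m)] at h1
    simp only [tr_tr] at h1
    rw [hz, hz]
    exact h1
  have hcont : Continuous (leg c k) := (c.ι.app k).2.1.continuous
  have hZ : ∀ a ∈ closure (Set.range z), ∀ b ∈ closure (Set.range z),
      dist (leg c k a) (leg c k b) = dist a b := by
    have hcl : IsClosed {p : (F.obj k).carrier × (F.obj k).carrier |
        dist (leg c k p.1) (leg c k p.2) = dist p.1 p.2} :=
      isClosed_eq (by fun_prop) (by fun_prop)
    have hsub : closure (Set.range z ×ˢ Set.range z) ⊆ _ :=
      closure_minimal (by rintro ⟨_, _⟩ ⟨⟨n, rfl⟩, ⟨m, rfl⟩⟩; exact hdist n m) hcl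
    rw [closure_prod_eq] at hsub
    exact fun a ha b hb => hsub (Set.mk_mem_prod ha hb)
  refine ⟨k, closure (Set.range z), hZ, ?_⟩
  let f : closure (Set.range z) → c.pt.carrier := fun a => leg c k a
  have hf : Isometry f := Isometry.of_dist_eq fun a b => hZ a a.2 b b.2
  have : CompleteSpace (closure (Set.range z)) := isClosed_closure.completeSpace_coe
  have hsub : closure (Set.range v) ⊆ Set.range f :=
    closure_minimal (by
      rintro _ ⟨n, rfl⟩
      exact ⟨⟨z n, subset_closure ⟨n, rfl⟩⟩, hz n⟩) hf.isClosedEmbedding.isClosed_range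
  intro w hw
  obtain ⟨a, ha⟩ := hsub hw
  exact ⟨a, a.2, ha⟩

/-- The pointed metric space on a closed subset containing the basepoint. -/
def sub (X : PCMet) (S : Set X.carrier) (hS : IsClosed S) (hp : X.pt ∈ S) : PCMet :=
  have := hS.completeSpace_coe
  ⟨S, ⟨X.pt, hp⟩⟩

/-- The inclusion of a closed subset. -/
def subIncl (X : PCMet) (S : Set X.carrier) (hS : IsClosed S) (hp : X.pt ∈ S) :
    sub X S hS hp ⟶ X :=
  mkHom Subtype.val (fun _ _ => le_rfl) rfl

/-- The legs of an `ℵ₁`-directed colimit are jointly surjective: the union of their images is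
closed, so the colimit factors through it. -/
lemma exists_leg_eq (hJ : IsAleph1Directed J) {c : Cocone F} (hc : IsColimit c)
    (w : c.pt.carrier) : ∃ j x, leg c j x = w := by
  let U : Set c.pt.carrier := {w | ∃ j x, leg c j x = w}
  have hU : IsClosed U := by
    refine isClosed_of_closure_subset fun w hw => ?_
    obtain ⟨v, hv, hvw⟩ := mem_closure_iff_seq_limit.1 hw
    obtain ⟨k, Z, -, h⟩ := exists_lift hJ hc v hv
    obtain ⟨a, -, ha⟩ := h w (mem_closure_of_tendsto hvw
      (Filter.Eventually.of_forall fun n => ⟨n, rfl⟩))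
    exact ⟨k, a, ha⟩
  have hp : c.pt.pt ∈ U := by
    obtain ⟨j, -⟩ := exists_ub hJ (fun e : Empty => e.elim)
    exact ⟨j, _, leg_pt c j⟩
  let s : Cocone F := mkCocone (sub c.pt U hU hp) (fun j x => ⟨leg c j x, j, x, rfl⟩)
    (fun j x y => leg_dist_le c j x y) (fun j => Subtype.ext (leg_pt c j))
    (fun f x => Subtype.ext (leg_map c f x))
  have hid : hc.desc s ≫ subIncl c.pt U hU hp = 𝟙 c.pt := by
    refine hc.hom_ext fun j => hom_ext fun x => ?_
    have := congrArg Subtype.val (desc_leg hc s j x)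
    exact this
  have hw : ((hc.desc s).1 w).1 = w := congrFun (congrArg Subtype.val hid) w
  rw [← hw]
  exact ((hc.desc s).1 w).2

end Directed

/-! ### Separable spaces are `ℵ₁`-presentable -/

/-- A morphism into an `ℵ₁`-directed colimit is determined by its values on a dense sequence,
so `exists_lift` lifts it to a stage and `exists_dist_tr_eq` makes two lifts equal later on. -/
lemma isAleph1Presentable_of_separable (A : PCMet)
    [TopologicalSpace.SeparableSpace A.carrier] : IsAleph1Presentable A := by
  intro J hJ
  refine ⟨fun {F} => ⟨fun {c} hc => ⟨?_⟩⟩⟩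
  have : Nonempty A.carrier := ⟨A.pt⟩
  have : IsDirectedOrder J := ⟨fun a b => exists_ub₂ hJ a b⟩
  let u := TopologicalSpace.denseSeq A.carrier
  have hu : DenseRange u := TopologicalSpace.denseRange_denseSeq A.carrier
  refine Types.FilteredColimit.isColimitOf' _ _ ?_ ?_
  · intro f
    change A ⟶ c.pt at f
    obtain ⟨k, Z, hZ, h⟩ := exists_lift hJ hc (fun n => f.1 (u n)) fun n => exists_leg_eq hJ hc _
    have hcl : ∀ a, f.1 a ∈ closure (Set.range fun n => f.1 (u n)) := fun a => by
      have := hu.closure_range ▸ Set.mem_univ a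
      have := image_closure_subset_closure_image f.2.1.continuous (Set.mem_image_of_mem f.1 this)
      rwa [← Set.range_comp] at this
    choose g hgZ hg using fun a => h _ (hcl a)
    -- the lift preserves the basepoint only after passing to a later stage
    obtain ⟨k', hk', hpt⟩ := exists_dist_tr_eq hJ hc (g A.pt) (F.obj k).pt
    rw [hg, leg_pt, hom_pt, dist_self, dist_eq_zero, tr_pt] at hpt
    refine ⟨k', mkHom (fun a => tr F hk' (g a)) (fun a b => ?_) hpt, ?_⟩
    · refine (tr_dist_le _ _ _).trans ?_
      rw [← hZ _ (hgZ a) _ (hgZ b), hg, hg]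
      exact hom_dist_le f a b
    · exact hom_ext fun a => ((leg_tr c hk' (g a)).trans (hg a)).symm
  · intro j f g hfg
    change A ⟶ F.obj j at f g
    have hfg' : ∀ a, leg c j (f.1 a) = leg c j (g.1 a) :=
      fun a => congrFun (congrArg Subtype.val hfg) a
    have hex : ∀ n, ∃ l : {l : J // j ≤ l}, tr F l.2 (f.1 (u n)) = tr F l.2 (g.1 (u n)) := by
      intro n
      obtain ⟨l, h, hl⟩ := exists_dist_tr_eq hJ hc (f.1 (u n)) (g.1 (u n))
      rw [hfg', dist_self, dist_eq_zero] at hl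
      exact ⟨⟨l, h⟩, hl⟩
    choose l hl using hex
    obtain ⟨k, hk⟩ := exists_ub hJ fun n => (l n).1
    have hjk : j ≤ k := (l 0).2.trans (hk 0)
    refine ⟨k, homOfLE hjk, ?_⟩
    change f ≫ F.map (homOfLE hjk) = g ≫ F.map (homOfLE hjk)
    refine Subtype.ext (hu.equalizer (f ≫ F.map _).2.1.continuous (g ≫ F.map _).2.1.continuous ?_)
    funext n
    have := congrArg (tr F (hk n)) (hl n)
    rwa [tr_tr, tr_tr] at this

/-! ### Every space is the directed union of its separable subspaces -/

section Union

variable (X : PCMet)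

/-- The closed separable subsets containing the basepoint. -/
def SepSub : Type :=
  {S : Set X.carrier // IsClosed S ∧ TopologicalSpace.IsSeparable S ∧ X.pt ∈ S}

instance : PartialOrder (SepSub X) := inferInstanceAs (PartialOrder (Subtype _))

lemma sepSub_directed : IsAleph1Directed (SepSub X) := by
  intro 𝒮 h𝒮
  have hc : 𝒮.Countable := by
    rwa [← Cardinal.le_aleph0_iff_set_countable, ← Cardinal.lt_aleph_one_iff]
  have := hc.to_subtype
  refine ⟨⟨closure ({X.pt} ∪ ⋃ S : 𝒮, S.1.1), isClosed_closure,
    ((Set.countable_singleton _).isSeparable.union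
      (TopologicalSpace.IsSeparable.iUnion fun S : 𝒮 => S.1.2.2.1)).closure,
    subset_closure (Or.inl rfl)⟩, fun S hS => ?_⟩
  change S.1 ⊆ _
  exact fun x hx => subset_closure (Or.inr (Set.mem_iUnion.2 ⟨⟨S, hS⟩, hx⟩))

/-- The diagram of closed separable pointed subspaces. -/
def sepDiag : SepSub X ⥤ PCMet where
  obj S := sub X S.1 S.2.1 S.2.2.2
  map {S T} f := mkHom (fun x => ⟨x.1, (leOfHom f : S.1 ⊆ T.1) x.2⟩) (fun _ _ => le_rfl) rfl
  map_id _ := rfl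
  map_comp _ _ := rfl

/-- The inclusions of the closed separable pointed subspaces. -/
def sepCocone : Cocone (sepDiag X) :=
  mkCocone X (fun S x => (x : S.1).1) (fun _ _ _ => le_rfl) (fun _ => rfl) (fun _ _ => rfl)

/-- The closed separable pointed subset generated by two points. -/
def pairSub (x y : X.carrier) : SepSub X :=
  ⟨{X.pt, x, y}, (Set.toFinite _).isClosed, (Set.toFinite _).countable.isSeparable, by simp⟩

lemma left_mem_pairSub (x y : X.carrier) : x ∈ (pairSub X x y).1 := Or.inr (Or.inl rfl)

lemma right_mem_pairSub (x y : X.carrier) : y ∈ (pairSub X x y).1 := Or.inr (Or.inr rfl)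

/-- On each subspace containing `x`, a cocone takes the same value at `x`. -/
lemma leg_pairSub (s : Cocone (sepDiag X)) (x : X.carrier) (S : SepSub X) (hx : x ∈ S.1) :
    leg s (pairSub X x x) ⟨x, left_mem_pairSub X x _⟩ = leg s S ⟨x, hx⟩ := by
  have hle : pairSub X x x ≤ S := by
    change ({X.pt, x, x} : Set X.carrier) ⊆ S.1
    rintro _ (rfl | rfl | rfl)
    exacts [S.2.2.2, hx, hx]
  exact (leg_map s (homOfLE hle) _).symm

/-- A space is the colimit of its closed separable pointed subspaces. -/
def sepIsColimit : IsColimit (sepCocone X) where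
  desc s := mkHom (fun x => leg s (pairSub X x x) ⟨x, left_mem_pairSub X x _⟩)
    (fun x y => by
      rw [leg_pairSub X s x (pairSub X x y) (left_mem_pairSub X x y),
        leg_pairSub X s y (pairSub X x y) (right_mem_pairSub X x y)]
      exact leg_dist_le s _ _ _)
    (leg_pt s _)
  fac s S := hom_ext fun x => leg_pairSub X s x.1 S x.2
  uniq s m hm := hom_ext fun x =>
    congrFun (congrArg Subtype.val (hm (pairSub X x x))) ⟨x, left_mem_pairSub X x _⟩

end Union

/-! ### A small set of representatives of the separable spaces -/

/-- The closed separable pointed subsets of `ℓ^∞`, which by the Kuratowski embedding represent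
all separable objects of `PCMet`. -/
def SepIndex : Type :=
  Σ x : lp (fun _ : ℕ => ℝ) ⊤, SepSub ⟨lp (fun _ : ℕ => ℝ) ⊤, x⟩

/-- The pointed space represented by an element of `SepIndex`. -/
noncomputable def sepObj (i : SepIndex) : PCMet := sub _ i.2.1 i.2.2.1 i.2.2.2.2

lemma exists_iso_sepObj (A : PCMet) [TopologicalSpace.SeparableSpace A.carrier] :
    ∃ i : SepIndex, Nonempty (A ≅ sepObj i) := by
  obtain ⟨f, hf⟩ := KuratowskiEmbedding.exists_isometric_embedding A.carrier
  refine ⟨⟨f A.pt, Set.range f, hf.isClosedEmbedding.isClosed_range,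
    TopologicalSpace.isSeparable_range hf.continuous, ⟨_, rfl⟩⟩, ⟨?_⟩⟩
  exact isoOfIsometryEquiv (Y := sepObj _) hf.isometryEquivOnRange rfl

end PCMet

/-- The category `CMet•` of pointed complete metric spaces is locally `ℵ₁`-presentable. -/
theorem PCMet.isLocallyAleph1Presentable : IsLocallyAleph1Presentable PCMet := by
  refine ⟨inferInstance, SepIndex, sepObj, fun i => ?_, fun X => ?_⟩
  · have : TopologicalSpace.SeparableSpace (sepObj i).carrier := i.2.2.2.1.separableSpace
    exact isAleph1Presentable_of_separable _
  · refine ⟨PartOrd.of (SepSub X), sepDiag X, sepCocone X, sepSub_directed X,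
      ⟨sepIsColimit X⟩, ⟨Iso.refl _⟩, fun S => ?_⟩
    have : TopologicalSpace.SeparableSpace ((sepDiag X).obj S).carrier :=
      S.2.2.1.separableSpace
    exact exists_iso_sepObj _
end
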